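/- Let (V,E,Ψ) be a strongly connected planar box-like self-affine GIFS with positive weights (p_e) and graph-directed measure family (μ_v)_{v∈V}, and fix q≥0. (a) For every s>γ(q) there is a constant C=C(s,q) such that ∑_{w∈E^*_δ} φ^{s,q}(w) ≤ C for all δ>0. (b) For every s<γ(q) there is a constant c=c(s,q)>0 such that ∑_{w∈E^*_δ} φ^{s,q}(w) ≥ c for all sufficiently small δ>0. -/

import Mathlib

open MeasureTheory Filter Set
open scoped Classical

noncomputable section

namespace LqGIFS

/-! ### Mesh cubes, moment sums, L^q spectra, box dimension -/

/-- Closed cube of the `δ`-mesh of `ℝ`. -/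
def meshCube1 (δ : ℝ) (k : ℤ) : Set ℝ := Set.Icc ((k : ℝ) * δ) (((k : ℝ) + 1) * δ)

/-- Closed cube of the `δ`-mesh of `ℝ²`. -/
def meshCube2 (δ : ℝ) (k : ℤ × ℤ) : Set (ℝ × ℝ) :=
  (Set.Icc ((k.1 : ℝ) * δ) (((k.1 : ℝ) + 1) * δ)) ×ˢ
    (Set.Icc ((k.2 : ℝ) * δ) (((k.2 : ℝ) + 1) * δ))

/-- The moment sum `D_δ^q(ν)` for a measure on `ℝ` (cubes of zero measure are omitted,
so that at `q = 0` this counts the mesh cubes of positive measure). -/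
def Dq1 (ν : Measure ℝ) (δ q : ℝ) : ℝ :=
  ∑' k : ℤ, if ν (meshCube1 δ k) = 0 then 0 else (ν (meshCube1 δ k)).toReal ^ q

/-- The moment sum `D_δ^q(ν)` for a measure on `ℝ²`. -/
def Dq2 (ν : Measure (ℝ × ℝ)) (δ q : ℝ) : ℝ :=
  ∑' k : ℤ × ℤ, if ν (meshCube2 δ k) = 0 then 0 else (ν (meshCube2 δ k)).toReal ^ q

/-- The `L^q`-spectrum of a measure on `ℝ` exists and equals `s` (i.e. upper and lower
`L^q`-spectra coincide and equal `s`). -/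
def HasLq1 (ν : Measure ℝ) (q s : ℝ) : Prop :=
  Tendsto (fun δ : ℝ => Real.log (Dq1 ν δ q) / (-Real.log δ))
    (nhdsWithin 0 (Set.Ioi 0)) (nhds s)

/-- The `L^q`-spectrum of a measure on `ℝ²` exists and equals `s`. -/
def HasLq2 (ν : Measure (ℝ × ℝ)) (q s : ℝ) : Prop :=
  Tendsto (fun δ : ℝ => Real.log (Dq2 ν δ q) / (-Real.log δ))
    (nhdsWithin 0 (Set.Ioi 0)) (nhds s)

/-- Number of closed `δ`-mesh cubes of `ℝ²` meeting `X`. -/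
def boxCount (X : Set (ℝ × ℝ)) (δ : ℝ) : ℕ :=
  Set.ncard {k : ℤ × ℤ | (X ∩ meshCube2 δ k).Nonempty}

/-- The box dimension of `X` exists and equals `d`. -/
def HasBoxDim (X : Set (ℝ × ℝ)) (d : ℝ) : Prop :=
  Tendsto (fun δ : ℝ => Real.log (boxCount X δ) / (-Real.log δ))
    (nhdsWithin 0 (Set.Ioi 0)) (nhds d)

/-! ### Matrices: 1-norm, spectral radius, permutation matrices -/

/-- The 1-norm `‖A‖ = ∑_{i,j} |a_{ij}|` of a square matrix. -/
def mnorm {ι : Type*} [Fintype ι] (A : Matrix ι ι ℝ) : ℝ := ∑ i, ∑ j, |A i j|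

/-- The spectral radius of a square real matrix, via the Gelfand formula. -/
def specRad {ι : Type*} [Fintype ι] [DecidableEq ι] (A : Matrix ι ι ℝ) : ℝ :=
  Filter.limsup (fun k : ℕ => (mnorm (A ^ k)) ^ ((k : ℝ)⁻¹)) Filter.atTop

/-- A square 0-1 matrix with exactly one 1 in each row and each column. -/
def IsPermMatrix {ι : Type*} (Z : Matrix ι ι ℝ) : Prop :=
  (∀ i j, Z i j = 0 ∨ Z i j = 1) ∧ (∀ i, ∃! j, Z i j = 1) ∧ (∀ j, ∃! i, Z i j = 1)

/-! ### Directed graphs -/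

/-- Strong connectivity of the finite directed graph with edge set `E`,
initial vertex map `ini` and terminal vertex map `ter`. -/
def GraphSC {V E : Type*} (ini ter : E → V) : Prop :=
  ∀ v v' : V, Relation.TransGen (fun u u' : V => ∃ e, ini e = u ∧ ter e = u') v v'

/-- The matrix `F^{(q)}_{x,y}` with entry `p_{e'}^q a_{e'}^x b_{e'}^y` at `(e,e')` when
`t(e) = i(e')`, and `0` otherwise. -/
def FmatG {V E : Type*} (ini ter : E → V) (p a b : E → ℝ) (q x y : ℝ) :
    Matrix E E ℝ :=
  fun e e' => if ter e = ini e' then p e' ^ q * a e' ^ x * b e' ^ y else 0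

/-- `f` is the entrywise product of the normalized left and right Perron vectors of the
irreducible matrix `F^{(q)}_{x,y(x)}` (spectral radius 1). -/
def IsPerronData {V E : Type*} [Fintype E] [DecidableEq E] (ini ter : E → V)
    (p a b : E → ℝ) (q x yx : ℝ) (f : E → ℝ) : Prop :=
  specRad (FmatG ini ter p a b q x yx) = 1 ∧
  ∃ u v : E → ℝ, (∀ e, 0 < u e) ∧ (∀ e, 0 < v e) ∧ (∑ e, u e) = 1 ∧
    (FmatG ini ter p a b q x yx).mulVec u = u ∧
    (FmatG ini ter p a b q x yx).vecMul v = v ∧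
    (∑ e, v e * u e) = 1 ∧ (∀ e, f e = v e * u e)

/-! ### Planar box-like graph-directed self-affine systems -/

/-- A planar box-like self-affine GIFS: a finite directed graph together with, for each
edge `e`, a contraction `ψ_e(z) = T_e z + t_e` whose linear part is the diagonal matrix
`diag(±a_e, ±b_e)` (when `diag e = true`) or the anti-diagonal matrix with entries
`±a_e` (top right) and `±b_e` (bottom left) (when `diag e = false`), `0 < a_e, b_e < 1`. -/
structure BoxLikeGIFS (V E : Type*) where
  init : E → V
  term : E → V
  a : E → ℝ
  b : E → ℝ
  sa : E → ℝ
  sb : E → ℝ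
  diag : E → Bool
  trans : E → ℝ × ℝ
  a_mem : ∀ e, a e ∈ Set.Ioo (0 : ℝ) 1
  b_mem : ∀ e, b e ∈ Set.Ioo (0 : ℝ) 1
  sa_mem : ∀ e, sa e = 1 ∨ sa e = -1
  sb_mem : ∀ e, sb e = 1 ∨ sb e = -1
  edge_exists : ∀ v, ∃ e, init e = v

namespace BoxLikeGIFS

variable {V E : Type*}

/-- The contraction `ψ_e`. -/
def map (S : BoxLikeGIFS V E) (e : E) : ℝ × ℝ → ℝ × ℝ := fun z =>
  if S.diag e then
    (S.sa e * S.a e * z.1 + (S.trans e).1, S.sb e * S.b e * z.2 + (S.trans e).2)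
  else
    (S.sa e * S.a e * z.2 + (S.trans e).1, S.sb e * S.b e * z.1 + (S.trans e).2)

def StronglyConnected (S : BoxLikeGIFS V E) : Prop := GraphSC S.init S.term

/-- The open unit square `(0,1)²`. -/
def unitSq : Set (ℝ × ℝ) := Set.Ioo (0 : ℝ) 1 ×ˢ Set.Ioo (0 : ℝ) 1

/-- The rectangular open set condition. -/
def ROSC (S : BoxLikeGIFS V E) : Prop :=
  (∀ e : E, S.map e '' unitSq ⊆ unitSq) ∧
  ∀ e e' : E, e ≠ e' → S.init e = S.init e' →
    Disjoint (S.map e '' unitSq) (S.map e' '' unitSq)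

/-- Positive weights summing to one at each vertex. -/
def IsWeights [Fintype E] (S : BoxLikeGIFS V E) (p : E → ℝ) : Prop :=
  (∀ e, 0 < p e) ∧ ∀ v : V, (∑ e : E, if S.init e = v then p e else 0) = 1

/-- `μ` is the associated graph-directed box-like self-affine measure family. -/
def IsGDMeasure [Fintype E] (S : BoxLikeGIFS V E) (p : E → ℝ)
    (μ : V → Measure (ℝ × ℝ)) : Prop :=
  (∀ v, IsProbabilityMeasure (μ v)) ∧
  ∀ v : V, μ v =
    ∑ e : E, if S.init e = v then
      ENNReal.ofReal (p e) • ((μ (S.term e)).map (S.map e)) else (0 : Measure (ℝ × ℝ))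

/-- `X` is the associated graph-directed self-affine carpet family. -/
def IsGDAttractor (S : BoxLikeGIFS V E) (X : V → Set (ℝ × ℝ)) : Prop :=
  (∀ v, (X v).Nonempty ∧ IsCompact (X v)) ∧
  ∀ v : V, X v = ⋃ e : E, ⋃ _ : S.init e = v, S.map e '' X (S.term e)

/-- The matrix `F^{(q)}_{x,y}` of the system. -/
def Fmat (S : BoxLikeGIFS V E) (p : E → ℝ) (q x y : ℝ) : Matrix E E ℝ :=
  FmatG S.init S.term p S.a S.b q x y

/-- The `(2#E) × (2#E)` block matrix `𝒢^{(q)}_{x,y}`, indexed by `E × Bool`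
(`false` = first index of the block, `true` = second). -/
def Gmat (S : BoxLikeGIFS V E) (p : E → ℝ) (τx τy : V → ℝ) (q x y : ℝ) :
    Matrix (E × Bool) (E × Bool) ℝ := fun i j =>
  if S.term i.1 = S.init j.1 then
    if S.diag j.1 then
      if i.2 = false ∧ j.2 = false then
        p j.1 ^ q * S.a j.1 ^ (x + τx (S.term j.1)) * S.b j.1 ^ (y - τx (S.term j.1))
      else if i.2 = true ∧ j.2 = true then
        p j.1 ^ q * S.b j.1 ^ (x + τy (S.term j.1)) * S.a j.1 ^ (y - τy (S.term j.1))
      else 0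
    else
      if i.2 = false ∧ j.2 = true then
        p j.1 ^ q * S.a j.1 ^ (x + τy (S.term j.1)) * S.b j.1 ^ (y - τy (S.term j.1))
      else if i.2 = true ∧ j.2 = false then
        p j.1 ^ q * S.b j.1 ^ (x + τx (S.term j.1)) * S.a j.1 ^ (y - τx (S.term j.1))
      else 0
  else 0

/-! ### Words -/

/-- An admissible word: consecutive edges are composable. -/
def Admissible (S : BoxLikeGIFS V E) (w : List E) : Prop :=
  List.Chain' (fun e e' => S.term e = S.init e') w

/-- `(c_w, d_w)`: width and height of the rectangle `ψ_w([0,1]²)`. -/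
def wdims (S : BoxLikeGIFS V E) : List E → ℝ × ℝ
  | [] => (1, 1)
  | e :: w =>
      if S.diag e then (S.a e * (wdims S w).1, S.b e * (wdims S w).2)
      else (S.a e * (wdims S w).2, S.b e * (wdims S w).1)

/-- Whether `T_w` is diagonal (`true`) or anti-diagonal (`false`). -/
def wordDiag (S : BoxLikeGIFS V E) : List E → Bool
  | [] => true
  | e :: w => S.diag e == wordDiag S w

/-- The larger singular value `α₁(w) = max(c_w, d_w)` of `T_w`. -/
def alpha1 (S : BoxLikeGIFS V E) (w : List E) : ℝ := max (S.wdims w).1 (S.wdims w).2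

/-- The smaller singular value `α₂(w) = min(c_w, d_w)` of `T_w`. -/
def alpha2 (S : BoxLikeGIFS V E) (w : List E) : ℝ := min (S.wdims w).1 (S.wdims w).2

/-- Initial vertex of a (nonempty) word. -/
def wordInit [Nonempty V] (S : BoxLikeGIFS V E) (w : List E) : V :=
  (w.head?.map S.init).getD (Classical.arbitrary V)

/-- Terminal vertex of a (nonempty) word. -/
def wordTerm [Nonempty V] (S : BoxLikeGIFS V E) (w : List E) : V :=
  (w.getLast?.map S.term).getD (Classical.arbitrary V)

/-- `p_w = p_{w_1} ⋯ p_{w_k}`. -/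
def wordProb (p : E → ℝ) (w : List E) : ℝ := (w.map p).prod

/-- `τ_w(q)`: given the values `τx v`, `τy v` of the `L^q`-spectra of the two coordinate
projections of `μ_v`, this is the `L^q`-spectrum of the projection of `μ_{t(w)} ∘ ψ_w⁻¹`
onto the longest side of `ψ_w([0,1]²)`, i.e. `τx (t w)` if `π_w = π_x` and `τy (t w)`
otherwise. -/
def wordTau [Nonempty V] (S : BoxLikeGIFS V E) (τx τy : V → ℝ) (w : List E) : ℝ :=
  if ((S.wdims w).2 ≤ (S.wdims w).1 ↔ S.wordDiag w = true) then τx (S.wordTerm w)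
  else τy (S.wordTerm w)

/-- The modified singular value function
`φ^{s,q}(w) = p_w^q α₁(w)^{τ_w(q)} α₂(w)^{s - τ_w(q)}`. -/
def msvf [Nonempty V] (S : BoxLikeGIFS V E) (p : E → ℝ) (τx τy : V → ℝ)
    (s q : ℝ) (w : List E) : ℝ :=
  wordProb p w ^ q * S.alpha1 w ^ (S.wordTau τx τy w) *
    S.alpha2 w ^ (s - S.wordTau τx τy w)

/-- The modified singular value function matrix `A_k^{s,q}`. -/
def Amat [Nonempty V] [Fintype E] (S : BoxLikeGIFS V E) (p : E → ℝ) (τx τy : V → ℝ)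
    (s q : ℝ) (k : ℕ) : Matrix V V ℝ := fun v v' =>
  ∑ f : Fin k → E,
    if S.Admissible (List.ofFn f) ∧ S.wordInit (List.ofFn f) = v ∧
        S.wordTerm (List.ofFn f) = v'
    then S.msvf p τx τy s q (List.ofFn f) else 0

/-- The family `E^*_δ` of admissible words whose shortest side drops below `δ`
exactly at the last letter. -/
def EstarDelta (S : BoxLikeGIFS V E) (δ : ℝ) : Set (List E) :=
  {w | w ≠ [] ∧ S.Admissible w ∧ S.alpha2 w < δ ∧ δ ≤ S.alpha2 w.dropLast}

end BoxLikeGIFS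

/-! ### Partition of the projections, for the splitting proposition -/

/-- The projection family: `(v, false) ↦ μ_v^x` and `(v, true) ↦ μ_v^y`. -/
def projMeas {V : Type*} (μ : V → Measure (ℝ × ℝ)) (i : V × Bool) : Measure ℝ :=
  if i.2 then (μ i.1).map Prod.snd else (μ i.1).map Prod.fst

/-- `A`, `B` is a partition of the projection family `{μ_v^x, μ_v^y}_v` into two disjoint
families of cardinality `#V`, on each of which the `L^q`-spectra exist and share a common
value, and which splits `{μ_v^x, μ_v^y}` for each `v`. -/
def GoodPartition {V : Type*} [Fintype V] (μ : V → Measure (ℝ × ℝ))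
    (A B : Finset (V × Bool)) : Prop :=
  Disjoint A B ∧ A ∪ B = Finset.univ ∧
  A.card = Fintype.card V ∧ B.card = Fintype.card V ∧
  ∃ τA τB : ℝ → ℝ,
    (∀ q : ℝ, 0 ≤ q → ∀ i ∈ A, HasLq1 (projMeas μ i) q (τA q)) ∧
    (∀ q : ℝ, 0 ≤ q → ∀ i ∈ B, HasLq1 (projMeas μ i) q (τB q)) ∧
    ∀ v : V, ((v, false) ∈ A ∧ (v, true) ∈ B) ∨ ((v, false) ∈ B ∧ (v, true) ∈ A)

end LqGIFS

end

open LqGIFS MeasureTheory Filter Set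

namespace LqGIFS

/-! ### Comparison of `L^q`-spectra under affine maps -/

/-- The summand of the moment sum `Dq1`. -/
noncomputable def momentTerm (ν : Measure ℝ) (δ q : ℝ) (k : ℤ) : ℝ :=
  if ν (meshCube1 δ k) = 0 then 0 else (ν (meshCube1 δ k)).toReal ^ q

lemma momentTerm_nonneg (ν : Measure ℝ) (δ q : ℝ) (k : ℤ) : 0 ≤ momentTerm ν δ q k := by
  unfold momentTerm
  split_ifs
  · exact le_rfl
  · positivity

lemma summable_momentTerm {ν : Measure ℝ} {R : ℝ} (hR : ν {x | R < |x|} = 0)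
    {δ : ℝ} (hδ : 0 < δ) (q : ℝ) : Summable (momentTerm ν δ q) := by
  apply summable_of_hasFiniteSupport
  refine (Set.finite_Icc (⌊-R / δ⌋ - 1) (⌈R / δ⌉)).subset ?_
  intro k hk
  by_contra hcon
  apply hk
  unfold momentTerm
  rw [if_pos]
  refine measure_mono_null ?_ hR
  rintro x ⟨hx1, hx2⟩
  simp only [Set.mem_Icc, not_and_or, not_le] at hcon
  simp only [Set.mem_ofPred_eq]
  rcases hcon with h | h
  · have h1 : k + 1 < ⌊-R / δ⌋ := by omega
    have h2 : (((k + 1 : ℤ)) : ℝ) < -R / δ := by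
      exact lt_of_lt_of_le (by exact_mod_cast h1) (Int.floor_le _)
    rw [lt_div_iff₀ hδ] at h2
    push_cast at h2
    have := neg_abs_le x
    linarith
  · have h2 : R / δ < (k : ℝ) := lt_of_le_of_lt (Int.le_ceil _) (by exact_mod_cast h)
    rw [div_lt_iff₀ hδ] at h2
    have := le_abs_self x
    linarith

lemma Dq1_pos {ν : Measure ℝ} [IsProbabilityMeasure ν] {R : ℝ} (hR : ν {x | R < |x|} = 0)
    {δ : ℝ} (hδ : 0 < δ) (q : ℝ) : 0 < Dq1 ν δ q := by
  have hex : ∃ k : ℤ, ν (meshCube1 δ k) ≠ 0 := by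
    by_contra! hcon
    have h0 : ν (⋃ k : ℤ, meshCube1 δ k) = 0 := measure_iUnion_null hcon
    have hU : (⋃ k : ℤ, meshCube1 δ k) = Set.univ := by
      refine Set.eq_univ_of_forall fun x => Set.mem_iUnion.2 ⟨⌊x / δ⌋, ?_, ?_⟩
      · have := Int.floor_le (x / δ)
        rwa [le_div_iff₀ hδ] at this
      · have := (Int.lt_floor_add_one (x / δ)).le
        rwa [div_le_iff₀ hδ] at this
    rw [hU, measure_univ] at h0
    exact one_ne_zero h0
  obtain ⟨k, hk⟩ := hex
  refine (summable_momentTerm hR hδ q).tsum_pos (momentTerm_nonneg ν δ q) k ?_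
  unfold momentTerm
  rw [if_neg hk]
  exact Real.rpow_pos_of_pos (ENNReal.toReal_pos hk (measure_ne_top _ _)) _

/-- If the image of a `δ / a`-mesh cube is covered by two `δ`-mesh cubes, its moment term is
controlled by those of the two cubes. -/
lemma momentTerm_le {ν ν' : Measure ℝ} [IsProbabilityMeasure ν] [IsProbabilityMeasure ν']
    {f : ℝ → ℝ} (hf : Measurable f) {p : ℝ} (hp : 0 < p)
    (hle : ENNReal.ofReal p • ν.map f ≤ ν') {q : ℝ} (hq : 0 ≤ q) {δ δ' : ℝ} {k j : ℤ}
    (hsub : meshCube1 δ' k ⊆ f ⁻¹' (meshCube1 δ j ∪ meshCube1 δ (j + 1))) :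
    momentTerm ν δ' q k ≤
      (2 / p) ^ q * (momentTerm ν' δ q j + momentTerm ν' δ q (j + 1)) := by
  have hmeas : ∀ i, MeasurableSet (meshCube1 δ i) := fun i => measurableSet_Icc
  have h1 : p * ν.real (meshCube1 δ' k) ≤
      ν'.real (meshCube1 δ j) + ν'.real (meshCube1 δ (j + 1)) := by
    have h2 : ν.real (meshCube1 δ' k) ≤
        (ν.map f).real (meshCube1 δ j ∪ meshCube1 δ (j + 1)) := by
      rw [map_measureReal_apply hf ((hmeas _).union (hmeas _))]
      exact measureReal_mono hsub
    have h3 : p * (ν.map f).real (meshCube1 δ j ∪ meshCube1 δ (j + 1)) ≤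
        ν'.real (meshCube1 δ j ∪ meshCube1 δ (j + 1)) := by
      have := hle (meshCube1 δ j ∪ meshCube1 δ (j + 1))
      rw [Measure.smul_apply, smul_eq_mul] at this
      have := ENNReal.toReal_mono (measure_ne_top _ _) this
      rwa [ENNReal.toReal_mul, ENNReal.toReal_ofReal hp.le] at this
    calc _ ≤ _ := mul_le_mul_of_nonneg_left h2 hp.le
      _ ≤ _ := h3
      _ ≤ _ := measureReal_union_le _ _
  have key : ∀ i, p * ν.real (meshCube1 δ' k) ≤ 2 * ν'.real (meshCube1 δ i) →
      ν (meshCube1 δ' k) ≠ 0 →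
      ν.real (meshCube1 δ' k) ^ q ≤ (2 / p) ^ q * momentTerm ν' δ q i := by
    intro i hi h0
    have hpos : 0 < ν.real (meshCube1 δ' k) := ENNReal.toReal_pos h0 (measure_ne_top _ _)
    have hpos' : 0 < ν'.real (meshCube1 δ i) := by
      have := mul_pos hp hpos
      linarith
    have h0' : ν' (meshCube1 δ i) ≠ 0 := by
      intro h
      simp [Measure.real, h] at hpos'
    unfold momentTerm
    rw [if_neg h0']
    change _ ≤ _ * (ν'.real (meshCube1 δ i)) ^ q
    rw [← Real.mul_rpow (by positivity) hpos'.le]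
    refine Real.rpow_le_rpow hpos.le ?_ hq
    rw [div_mul_eq_mul_div, le_div_iff₀ hp]
    linarith
  have hK : 0 ≤ (2 / p) ^ q := by positivity
  have n1 := mul_nonneg hK (momentTerm_nonneg ν' δ q j)
  have n2 := mul_nonneg hK (momentTerm_nonneg ν' δ q (j + 1))
  rw [mul_add]
  by_cases h0 : ν (meshCube1 δ' k) = 0
  · rw [momentTerm, if_pos h0]
    linarith
  · rw [momentTerm, if_neg h0]
    change ν.real _ ^ q ≤ _
    rcases le_total (ν'.real (meshCube1 δ j)) (ν'.real (meshCube1 δ (j + 1))) with h | h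
    · have := key (j + 1) (by linarith) h0
      linarith
    · have := key j (by linarith) h0
      linarith

lemma tsum_le_of_le_shift {g g' : ℤ → ℝ} {K : ℝ} (hg : ∀ k, 0 ≤ g k) (hs : Summable g')
    (j : ℤ ≃ ℤ) (h : ∀ k, g k ≤ K * (g' (j k) + g' (j k + 1))) :
    ∑' k, g k ≤ K * 2 * ∑' k, g' k := by
  have s1 : Summable fun k => g' (j k) := (j.summable_iff (f := g')).2 hs
  have s2 : Summable fun k => g' (j k + 1) :=
    ((j.trans (Equiv.addRight 1)).summable_iff (f := g')).2 hs
  have s3 := (s1.add s2).mul_left K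
  have s0 : Summable g := Summable.of_nonneg_of_le hg h s3
  have e1 : ∑' k, g' (j k) = ∑' k, g' k := j.tsum_eq g'
  have e2 : ∑' k, g' (j k + 1) = ∑' k, g' k := (j.trans (Equiv.addRight 1)).tsum_eq g'
  calc ∑' k, g k ≤ ∑' k, K * (g' (j k) + g' (j k + 1)) := s0.tsum_le_tsum h s3
    _ = K * 2 * ∑' k, g' k := by
      rw [tsum_mul_left, s1.tsum_add s2, e1, e2]
      ring

lemma Dq1_le_of_smul_map_le {ν ν' : Measure ℝ} [IsProbabilityMeasure ν]
    [IsProbabilityMeasure ν'] {σ a t p q R δ : ℝ} (hσ : σ = 1 ∨ σ = -1) (ha : 0 < a)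
    (hp : 0 < p) (hq : 0 ≤ q)
    (hle : ENNReal.ofReal p • ν.map (fun x => σ * a * x + t) ≤ ν')
    (hR : ν' {x | R < |x|} = 0) (hδ : 0 < δ) :
    Dq1 ν (δ / a) q ≤ (2 / p) ^ q * 2 * Dq1 ν' δ q := by
  have hf : Measurable (fun x : ℝ => σ * a * x + t) := by fun_prop
  have f1 := Int.floor_le (t / δ)
  have f2 := (Int.lt_floor_add_one (t / δ)).le
  rw [le_div_iff₀ hδ] at f1
  rw [div_le_iff₀ hδ] at f2
  have hcover : ∀ (y : ℝ) (j : ℤ), (j : ℝ) * δ ≤ y → y ≤ ((j : ℝ) + 2) * δ →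
      y ∈ meshCube1 δ j ∪ meshCube1 δ (j + 1) := by
    intro y j h1 h2
    rcases le_total y (((j : ℝ) + 1) * δ) with h | h
    · exact Or.inl ⟨h1, h⟩
    · refine Or.inr ⟨by push_cast; exact h, ?_⟩
      push_cast
      linarith
  have hcube : ∀ (k : ℤ) (x : ℝ), x ∈ meshCube1 (δ / a) k →
      (k : ℝ) * δ ≤ a * x ∧ a * x ≤ ((k : ℝ) + 1) * δ := by
    rintro k x ⟨h1, h2⟩
    rw [← mul_div_assoc, div_le_iff₀ ha] at h1
    rw [← mul_div_assoc, le_div_iff₀ ha] at h2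
    constructor <;> linarith
  rcases hσ with rfl | rfl
  · refine tsum_le_of_le_shift (momentTerm_nonneg ν _ q) (summable_momentTerm hR hδ q)
      (Equiv.addRight ⌊t / δ⌋) fun k => momentTerm_le hf hp hle hq ?_
    intro x hx
    obtain ⟨h1, h2⟩ := hcube k x hx
    apply hcover <;> simp only [Equiv.coe_addRight] <;> push_cast <;> nlinarith
  · refine tsum_le_of_le_shift (momentTerm_nonneg ν _ q) (summable_momentTerm hR hδ q)
      (Equiv.subLeft (⌊t / δ⌋ - 1)) fun k => momentTerm_le hf hp hle hq ?_
    intro x hx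
    obtain ⟨h1, h2⟩ := hcube k x hx
    apply hcover <;> simp only [Equiv.subLeft_apply] <;> push_cast <;> nlinarith

/-- If a measure dominates a multiple of an affine image of `ν`, then the `L^q`-spectrum of `ν` is at
most that of the measure. -/
lemma HasLq1.le_of_smul_map_le {ν ν' : Measure ℝ} [IsProbabilityMeasure ν]
    [IsProbabilityMeasure ν'] {σ a t p q R R' τ τ' : ℝ} (hσ : σ = 1 ∨ σ = -1) (ha : 0 < a)
    (hp : 0 < p) (hq : 0 ≤ q)
    (hle : ENNReal.ofReal p • ν.map (fun x => σ * a * x + t) ≤ ν')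
    (hR : ν {x | R < |x|} = 0) (hR' : ν' {x | R' < |x|} = 0)
    (h : HasLq1 ν q τ) (h' : HasLq1 ν' q τ') : τ ≤ τ' := by
  have hlog : Tendsto (fun δ : ℝ => -Real.log δ) (nhdsWithin 0 (Set.Ioi 0)) atTop :=
    tendsto_neg_atBot_atTop.comp Real.tendsto_log_nhdsGT_zero
  have hdiv : Tendsto (fun δ : ℝ => δ / a) (nhdsWithin 0 (Set.Ioi 0))
      (nhdsWithin 0 (Set.Ioi 0)) := by
    refine tendsto_nhdsWithin_iff.2 ⟨?_, ?_⟩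
    · have : Tendsto (fun δ : ℝ => δ / a) (nhds 0) (nhds (0 / a)) :=
        (continuous_id.div_const a).tendsto 0
      rw [zero_div] at this
      exact this.mono_left nhdsWithin_le_nhds
    · filter_upwards [self_mem_nhdsWithin] with δ hδ
      exact div_pos hδ ha
  have hconst : ∀ c : ℝ, Tendsto (fun δ : ℝ => c / -Real.log δ) (nhdsWithin 0 (Set.Ioi 0))
      (nhds 0) := fun c => hlog.const_div_atTop c
  have hL : Tendsto (fun δ : ℝ => Real.log (Dq1 ν (δ / a) q) / (-Real.log (δ / a)) *
      (1 + Real.log a / -Real.log δ)) (nhdsWithin 0 (Set.Ioi 0)) (nhds τ) := by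
    simpa using (Tendsto.comp h hdiv).mul ((hconst (Real.log a)).const_add 1)
  have hRt : Tendsto (fun δ : ℝ => Real.log ((2 / p) ^ q * 2) / -Real.log δ +
      Real.log (Dq1 ν' δ q) / (-Real.log δ)) (nhdsWithin 0 (Set.Ioi 0)) (nhds τ') := by
    simpa using (hconst _).add h'
  refine le_of_tendsto_of_tendsto hL hRt ?_
  filter_upwards [self_mem_nhdsWithin, hlog.eventually_gt_atTop 0,
    (hlog.comp hdiv).eventually_gt_atTop 0] with δ hδ h1 h2
  have hδ' : 0 < δ := hδ
  simp only [Function.comp] at h2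
  have e : (1 + Real.log a / -Real.log δ) = (-Real.log (δ / a)) / -Real.log δ := by
    rw [Real.log_div hδ'.ne' ha.ne', eq_div_iff h1.ne', add_mul, div_mul_cancel₀ _ h1.ne']
    ring
  rw [e, div_mul_div_cancel₀ h2.ne', ← add_div]
  refine div_le_div_of_nonneg_right ?_ h1.le
  have hK : (0 : ℝ) < (2 / p) ^ q * 2 := by positivity
  rw [← Real.log_mul hK.ne' (Dq1_pos hR' hδ' q).ne']
  exact Real.log_le_log (Dq1_pos hR (div_pos hδ' ha) q)
    (Dq1_le_of_smul_map_le hσ ha hp hq hle hR' hδ')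

namespace BoxLikeGIFS

variable {V E : Type*}

/-! ### Splitting of the projections -/

/-- A common bound `r < 1` for all the contraction ratios. -/
lemma exists_ratio [Finite E] (S : BoxLikeGIFS V E) :
    ∃ r : ℝ, 0 < r ∧ r < 1 ∧ ∀ e, S.a e ≤ r ∧ S.b e ≤ r := by
  let f : Option E → ℝ := fun o => o.elim (1 / 2) fun e => max (S.a e) (S.b e)
  obtain ⟨o, ho⟩ := Finite.exists_max f
  refine ⟨f o, ?_, ?_, fun e => ?_⟩
  · exact lt_of_lt_of_le (by norm_num [f]) (ho none)
  · cases o with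
    | none => norm_num [f]
    | some e => exact max_lt (S.a_mem e).2 (S.b_mem e).2
  · exact max_le_iff.1 (ho (some e))

lemma measurable_map (S : BoxLikeGIFS V E) (e : E) : Measurable (S.map e) := by
  unfold map
  split_ifs <;> fun_prop

lemma abs_affine_le {σ a r x t M N : ℝ} (hσ : σ = 1 ∨ σ = -1) (ha : 0 < a) (har : a ≤ r)
    (hx : |x| ≤ M) (ht : |t| ≤ N) : |σ * a * x + t| ≤ r * M + N := by
  have h1 : |σ| = 1 := by rcases hσ with rfl | rfl <;> simp
  refine (abs_add_le _ _).trans (add_le_add ?_ ht)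
  rw [abs_mul, abs_mul, h1, one_mul, abs_of_pos ha]
  exact mul_le_mul har hx (abs_nonneg _) (ha.le.trans har)

lemma norm_map_le (S : BoxLikeGIFS V E) {e : E} {r : ℝ} (hr : S.a e ≤ r ∧ S.b e ≤ r)
    (z : ℝ × ℝ) : ‖S.map e z‖ ≤ r * ‖z‖ + ‖S.trans e‖ := by
  have z1 : |z.1| ≤ ‖z‖ := norm_fst_le z
  have z2 : |z.2| ≤ ‖z‖ := norm_snd_le z
  have t1 : |(S.trans e).1| ≤ ‖S.trans e‖ := norm_fst_le (S.trans e)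
  have t2 : |(S.trans e).2| ≤ ‖S.trans e‖ := norm_snd_le (S.trans e)
  have a0 := (S.a_mem e).1
  have b0 := (S.b_mem e).1
  unfold map
  split_ifs
  · exact max_le (abs_affine_le (S.sa_mem e) a0 hr.1 z1 t1)
      (abs_affine_le (S.sb_mem e) b0 hr.2 z2 t2)
  · exact max_le (abs_affine_le (S.sa_mem e) a0 hr.1 z2 t1)
      (abs_affine_le (S.sb_mem e) b0 hr.2 z1 t2)

lemma IsGDMeasure.tail_le [Fintype E] {S : BoxLikeGIFS V E} {p : E → ℝ} (hp : S.IsWeights p)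
    {μ : V → Measure (ℝ × ℝ)} (hμ : S.IsGDMeasure p μ) {m m' : ℝ} {ε : ENNReal}
    (hm : ∀ e z, m' < ‖S.map e z‖ → m < ‖z‖)
    (h : ∀ v, μ v {z | m < ‖z‖} ≤ ε) (v : V) : μ v {z | m' < ‖z‖} ≤ ε := by
  have hmeas : MeasurableSet {z : ℝ × ℝ | m' < ‖z‖} :=
    measurableSet_lt measurable_const measurable_norm
  have hsum : ∑ e : E, (if S.init e = v then ENNReal.ofReal (p e) else 0) = 1 := by
    rw [← ENNReal.ofReal_one, ← hp.2 v, ENNReal.ofReal_sum_of_nonneg]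
    · refine Finset.sum_congr rfl fun e _ => ?_
      split_ifs <;> simp
    · intro e _
      split_ifs
      · exact (hp.1 e).le
      · exact le_rfl
  rw [hμ.2 v, Measure.finsetSum_apply]
  calc _ ≤ ∑ e : E, (if S.init e = v then ENNReal.ofReal (p e) else 0) * ε := by
        refine Finset.sum_le_sum fun e _ => ?_
        split_ifs
        · rw [Measure.smul_apply, smul_eq_mul, Measure.map_apply (S.measurable_map e) hmeas]
          gcongr
          exact (measure_mono fun z hz => hm e z hz).trans (h _)
        · simp
    _ = ε := by rw [← Finset.sum_mul, hsum, one_mul]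

/-- The measures of a graph-directed self-affine family are compactly supported. -/
lemma IsGDMeasure.exists_tail_eq_zero [Finite V] [Fintype E] {S : BoxLikeGIFS V E} {p : E → ℝ}
    (hp : S.IsWeights p) {μ : V → Measure (ℝ × ℝ)} (hμ : S.IsGDMeasure p μ) :
    ∃ R : ℝ, ∀ v, μ v {z | R < ‖z‖} = 0 := by
  obtain ⟨r, hr0, hr1, hr⟩ := S.exists_ratio
  set T : ℝ := ∑ e, ‖S.trans e‖ with hT
  have hTe : ∀ e, ‖S.trans e‖ ≤ T := fun e =>
    Finset.single_le_sum (f := fun e => ‖S.trans e‖) (fun _ _ => norm_nonneg _)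
      (Finset.mem_univ e)
  set R := T / (1 - r) with hR
  have hRT : R * (1 - r) = T := div_mul_cancel₀ _ (by linarith)
  have step : ∀ (m : ℝ) (ε : ENNReal), (∀ v, μ v {z | R + m < ‖z‖} ≤ ε) →
      ∀ v, μ v {z | R + r * m < ‖z‖} ≤ ε := by
    intro m ε h
    refine hμ.tail_le hp (fun e z hz => ?_) h
    have h1 := S.norm_map_le (hr e) z
    have h2 := hTe e
    have h3 : r * (R + m) < r * ‖z‖ := by nlinarith
    exact lt_of_mul_lt_mul_left h3 hr0.le
  have iter : ∀ (n : ℕ) (m : ℝ) (ε : ENNReal), (∀ v, μ v {z | R + m < ‖z‖} ≤ ε) →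
      ∀ v, μ v {z | R + r ^ n * m < ‖z‖} ≤ ε := by
    intro n
    induction n with
    | zero => intro m ε h; simpa using h
    | succ n ih =>
      intro m ε h
      have := step _ ε (ih m ε h)
      rwa [← mul_assoc, ← pow_succ'] at this
  refine ⟨R + 1, fun v => ?_⟩
  refine le_antisymm (le_of_forall_pos_le_add fun ε hε => ?_) bot_le
  rw [zero_add]
  have htail : ∀ u, ∀ᶠ n : ℕ in atTop, μ u {z | R + (n : ℝ) < ‖z‖} < ε := by
    intro u
    have := hμ.1 u
    have hlim : Tendsto (fun n : ℕ => μ u {z | R + (n : ℝ) < ‖z‖}) atTop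
        (nhds (μ u (⋂ n : ℕ, {z | R + (n : ℝ) < ‖z‖}))) := by
      refine tendsto_measure_iInter_atTop
        (fun n => (measurableSet_lt measurable_const measurable_norm).nullMeasurableSet) ?_
        ⟨0, measure_ne_top _ _⟩
      intro n n' hn z hz
      have : (n : ℝ) ≤ n' := by exact_mod_cast hn
      simp only [Set.mem_ofPred_eq] at hz ⊢
      linarith
    have hempty : (⋂ n : ℕ, {z : ℝ × ℝ | R + (n : ℝ) < ‖z‖}) = ∅ := by
      refine Set.eq_empty_of_forall_notMem fun z hz => ?_
      obtain ⟨n, hn⟩ := exists_nat_gt (‖z‖ - R)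
      have := Set.mem_iInter.1 hz n
      simp only [Set.mem_ofPred_eq] at this
      linarith
    rw [hempty, measure_empty] at hlim
    exact hlim.eventually (gt_mem_nhds hε)
  obtain ⟨m, hm⟩ := (eventually_all.2 htail).exists
  have hpow : Tendsto (fun n : ℕ => r ^ n * (m : ℝ)) atTop (nhds (0 * m)) :=
    (tendsto_pow_atTop_nhds_zero_of_lt_one hr0.le hr1).mul_const _
  rw [zero_mul] at hpow
  obtain ⟨n, hn⟩ := (hpow.eventually (gt_mem_nhds zero_lt_one)).exists
  refine (measure_mono ?_).trans (iter n m ε (fun u => (hm u).le) v)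
  intro z hz
  simp only [Set.mem_ofPred_eq] at hz ⊢
  linarith

lemma IsGDMeasure.smul_map_le [Fintype E] {S : BoxLikeGIFS V E} {p : E → ℝ}
    {μ : V → Measure (ℝ × ℝ)} (hμ : S.IsGDMeasure p μ) (e : E) :
    ENNReal.ofReal (p e) • (μ (S.term e)).map (S.map e) ≤ μ (S.init e) := by
  rw [hμ.2 (S.init e)]
  have := Finset.single_le_sum
    (f := fun e' => if S.init e' = S.init e then
      ENNReal.ofReal (p e') • ((μ (S.term e')).map (S.map e')) else (0 : Measure (ℝ × ℝ)))
    (fun _ _ => Measure.zero_le _) (Finset.mem_univ e)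
  simpa using this

/-- A pair of vertex functions `τx, τy`, seen as a function of a vertex and of a coordinate
direction (`false` for the first coordinate). -/
noncomputable def pairTau (τx τy : V → ℝ) (v : V) (i : Bool) : ℝ := if i then τy v else τx v

/-- The pair `τx, τy` is carried along every edge: preserved by diagonal edges and swapped by
anti-diagonal ones. -/
def IsSplit (S : BoxLikeGIFS V E) (τx τy : V → ℝ) : Prop :=
  ∀ e i, pairTau τx τy (S.init e) i = pairTau τx τy (S.term e) (i == S.diag e)

lemma IsGDMeasure.pairTau_le [Finite V] [Fintype E] {S : BoxLikeGIFS V E} {p : E → ℝ}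
    (hp : S.IsWeights p) {μ : V → Measure (ℝ × ℝ)} (hμ : S.IsGDMeasure p μ) {q : ℝ}
    (hq : 0 ≤ q) {τx τy : V → ℝ} (hτx : ∀ v : V, HasLq1 ((μ v).map Prod.fst) q (τx v))
    (hτy : ∀ v : V, HasLq1 ((μ v).map Prod.snd) q (τy v)) (e : E) (i : Bool) :
    pairTau τx τy (S.term e) (i == S.diag e) ≤ pairTau τx τy (S.init e) i := by
  obtain ⟨R, hR⟩ := hμ.exists_tail_eq_zero hp
  have := hμ.1
  have p1 : ∀ v, IsProbabilityMeasure ((μ v).map Prod.fst) := fun v =>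
    Measure.isProbabilityMeasure_map measurable_fst.aemeasurable
  have p2 : ∀ v, IsProbabilityMeasure ((μ v).map Prod.snd) := fun v =>
    Measure.isProbabilityMeasure_map measurable_snd.aemeasurable
  have hmeas : MeasurableSet {x : ℝ | R < |x|} :=
    measurableSet_lt measurable_const measurable_abs
  have R1 : ∀ v, (μ v).map Prod.fst {x | R < |x|} = 0 := fun v => by
    rw [Measure.map_apply measurable_fst hmeas]
    exact measure_mono_null (fun z hz => lt_of_lt_of_le hz (norm_fst_le z)) (hR v)
  have R2 : ∀ v, (μ v).map Prod.snd {x | R < |x|} = 0 := fun v => by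
    rw [Measure.map_apply measurable_snd hmeas]
    exact measure_mono_null (fun z hz => lt_of_lt_of_le hz (norm_snd_le z)) (hR v)
  have hdom : ∀ (g h : ℝ × ℝ → ℝ) (f : ℝ → ℝ), Measurable g → Measurable h → Measurable f →
      (∀ z, g (S.map e z) = f (h z)) →
      ENNReal.ofReal (p e) • ((μ (S.term e)).map h).map f ≤ (μ (S.init e)).map g := by
    intro g h f hg hh hf heq
    have h1 := Measure.map_mono (hμ.smul_map_le e) hg
    rw [Measure.map_smul, Measure.map_map hg (S.measurable_map e)] at h1
    rw [Measure.map_map hf hh]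
    have : g ∘ S.map e = f ∘ h := funext heq
    rwa [this] at h1
  have fa : Measurable (fun x : ℝ => S.sa e * S.a e * x + (S.trans e).1) := by fun_prop
  have fb : Measurable (fun x : ℝ => S.sb e * S.b e * x + (S.trans e).2) := by fun_prop
  cases i <;> cases hd : S.diag e <;> simp only [pairTau]
  · exact HasLq1.le_of_smul_map_le (S.sa_mem e) (S.a_mem e).1 (hp.1 e) hq
      (hdom _ _ _ measurable_fst measurable_snd fa fun z => by simp [map, hd])
      (R2 _) (R1 _) (hτy _) (hτx _)
  · exact HasLq1.le_of_smul_map_le (S.sa_mem e) (S.a_mem e).1 (hp.1 e) hq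
      (hdom _ _ _ measurable_fst measurable_fst fa fun z => by simp [map, hd])
      (R1 _) (R1 _) (hτx _) (hτx _)
  · exact HasLq1.le_of_smul_map_le (S.sb_mem e) (S.b_mem e).1 (hp.1 e) hq
      (hdom _ _ _ measurable_snd measurable_fst fb fun z => by simp [map, hd])
      (R1 _) (R2 _) (hτx _) (hτy _)
  · exact HasLq1.le_of_smul_map_le (S.sb_mem e) (S.b_mem e).1 (hp.1 e) hq
      (hdom _ _ _ measurable_snd measurable_snd fb fun z => by simp [map, hd])
      (R2 _) (R2 _) (hτy _) (hτy _)

lemma isSplit_of_pairTau_le {S : BoxLikeGIFS V E} (hSC : S.StronglyConnected) {τx τy : V → ℝ}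
    (h : ∀ e i, pairTau τx τy (S.term e) (i == S.diag e) ≤ pairTau τx τy (S.init e) i) :
    S.IsSplit τx τy ∧ ∀ v v', τx v + τy v = τx v' + τy v' := by
  have hedge : ∀ e, τx (S.term e) + τy (S.term e) ≤ τx (S.init e) + τy (S.init e) := by
    intro e
    have h0 := h e false
    have h1 := h e true
    cases hd : S.diag e <;> simp [pairTau, hd] at h0 h1 <;> linarith
  have hle : ∀ v v', τx v' + τy v' ≤ τx v + τy v := by
    intro v v'
    have hpath := hSC v v'
    induction hpath with
    | single h => obtain ⟨e, rfl, rfl⟩ := h; exact hedge e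
    | tail _ h ih => obtain ⟨e, rfl, rfl⟩ := h; exact (hedge e).trans ih
  refine ⟨fun e i => ?_, fun v v' => le_antisymm (hle _ _) (hle _ _)⟩
  have h0 := h e false
  have h1 := h e true
  have h2 := hle (S.term e) (S.init e)
  cases i <;> cases hd : S.diag e <;> simp [pairTau, hd] at h0 h1 ⊢ <;> linarith

/-! ### Words -/

/-- Side length of `ψ_w([0,1]²)` in the given coordinate direction. -/
noncomputable def side (S : BoxLikeGIFS V E) (w : List E) (i : Bool) : ℝ :=
  if i then (S.wdims w).2 else (S.wdims w).1

lemma side_append (S : BoxLikeGIFS V E) (w u : List E) (i : Bool) :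
    S.side (w ++ u) i = S.side w i * S.side u (i == S.wordDiag w) := by
  induction w generalizing i with
  | nil => cases i <;> simp [side, wdims, wordDiag]
  | cons e w ih =>
    have h0 := ih false
    have h1 := ih true
    cases i <;> cases hd : S.diag e <;> cases hw : S.wordDiag w <;>
      simp_all [side, wdims, wordDiag, mul_assoc]

lemma side_pos (S : BoxLikeGIFS V E) (w : List E) (i : Bool) : 0 < S.side w i := by
  induction w generalizing i with
  | nil => cases i <;> simp [side, wdims]
  | cons e w ih =>
    have h0 := ih false
    have h1 := ih true
    have a0 := (S.a_mem e).1
    have b0 := (S.b_mem e).1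
    cases i <;> cases hd : S.diag e <;> simp_all [side, wdims]

lemma side_le_pow (S : BoxLikeGIFS V E) {r : ℝ} (hr : ∀ e, S.a e ≤ r ∧ S.b e ≤ r)
    (w : List E) (i : Bool) : S.side w i ≤ r ^ w.length := by
  induction w generalizing i with
  | nil => cases i <;> simp [side, wdims]
  | cons e w ih =>
    have key : ∀ (x : ℝ) (j : Bool), 0 < x → x ≤ r → x * S.side w j ≤ r ^ (w.length + 1) := by
      intro x j hx hxr
      rw [pow_succ']
      exact mul_le_mul hxr (ih j) (S.side_pos w j).le (hx.le.trans hxr)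
    have a0 := fun j => key _ j (S.a_mem e).1 (hr e).1
    have b0 := fun j => key _ j (S.b_mem e).1 (hr e).2
    cases i <;> cases hd : S.diag e <;> simp only [side, wdims, hd, List.length_cons]
    · exact a0 true
    · exact a0 false
    · exact b0 false
    · exact b0 true

lemma alpha2_pos (S : BoxLikeGIFS V E) (w : List E) : 0 < S.alpha2 w :=
  lt_min (S.side_pos w false) (S.side_pos w true)

lemma alpha1_pos (S : BoxLikeGIFS V E) (w : List E) : 0 < S.alpha1 w :=
  lt_max_of_lt_left (S.side_pos w false)

lemma alpha2_le_pow (S : BoxLikeGIFS V E) {r : ℝ} (hr : ∀ e, S.a e ≤ r ∧ S.b e ≤ r)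
    (w : List E) : S.alpha2 w ≤ r ^ w.length :=
  (min_le_left _ _).trans (S.side_le_pow hr w false)

lemma alpha2_nil (S : BoxLikeGIFS V E) : S.alpha2 [] = 1 := by simp [alpha2, wdims]

lemma wordProb_pos {p : E → ℝ} (hp : ∀ e, 0 < p e) (w : List E) : 0 < wordProb p w :=
  List.prod_pos fun x hx => by
    obtain ⟨e, _, rfl⟩ := List.mem_map.1 hx
    exact hp e

lemma wordProb_append (p : E → ℝ) (w u : List E) :
    wordProb p (w ++ u) = wordProb p w * wordProb p u := by simp [wordProb]

lemma Admissible.left_of_append {S : BoxLikeGIFS V E} {w u : List E}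
    (h : S.Admissible (w ++ u)) : S.Admissible w :=
  List.IsChain.left_of_append h

lemma Admissible.right_of_append {S : BoxLikeGIFS V E} {w u : List E}
    (h : S.Admissible (w ++ u)) : S.Admissible u :=
  List.IsChain.right_of_append h

lemma exists_side_le (S : BoxLikeGIFS V E) (w : List E) : ∃ i, S.side w (!i) ≤ S.side w i := by
  rcases le_total (S.side w false) (S.side w true) with h | h
  · exact ⟨true, h⟩
  · exact ⟨false, h⟩

section Vertices

variable [Nonempty V]

lemma wordInit_append (S : BoxLikeGIFS V E) {w : List E} (hw : w ≠ []) (u : List E) :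
    S.wordInit (w ++ u) = S.wordInit w := by
  obtain ⟨e, w', rfl⟩ := List.exists_cons_of_ne_nil hw
  rfl

lemma wordTerm_append (S : BoxLikeGIFS V E) (w : List E) {u : List E} (hu : u ≠ []) :
    S.wordTerm (w ++ u) = S.wordTerm u := by
  simp [wordTerm, List.getLast?_append, List.getLast?_eq_some_getLast hu]

lemma admissible_append_iff (S : BoxLikeGIFS V E) {w u : List E} (hw : w ≠ []) (hu : u ≠ []) :
    S.Admissible (w ++ u) ↔ S.Admissible w ∧ S.Admissible u ∧ S.wordTerm w = S.wordInit u := by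
  obtain ⟨e, u', rfl⟩ := List.exists_cons_of_ne_nil hu
  have hlast := List.getLast?_eq_some_getLast hw
  change List.IsChain _ _ ↔ List.IsChain _ _ ∧ List.IsChain _ _ ∧ _
  rw [List.isChain_append]
  simp [wordTerm, wordInit, hlast]

lemma IsSplit.pairTau_wordInit {S : BoxLikeGIFS V E} {τx τy : V → ℝ} (hS : S.IsSplit τx τy)
    {w : List E} (hw : w ≠ []) (hadm : S.Admissible w) (i : Bool) :
    pairTau τx τy (S.wordInit w) i = pairTau τx τy (S.wordTerm w) (i == S.wordDiag w) := by
  induction w generalizing i with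
  | nil => exact absurd rfl hw
  | cons e w ih =>
    have h1 := hS e i
    rcases eq_or_ne w [] with rfl | hne
    · simpa [wordInit, wordTerm, wordDiag] using h1
    · obtain ⟨-, hadm', hterm⟩ :=
        (S.admissible_append_iff (w := [e]) (List.cons_ne_nil _ _) hne).1 hadm
      have hterm' : S.term e = S.wordInit w := by simpa [wordTerm] using hterm
      have h2 : S.wordTerm (e :: w) = S.wordTerm w := S.wordTerm_append [e] hne
      have h3 : S.wordInit (e :: w) = S.init e := rfl
      rw [h2, h3, h1, hterm', ih hne hadm']
      congr 1
      cases i <;> cases hd : S.diag e <;> cases hw : S.wordDiag w <;> simp [wordDiag, hd, hw]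

/-! ### The modified singular value function -/

lemma msvf_pos (S : BoxLikeGIFS V E) {p : E → ℝ} (hp : ∀ e, 0 < p e) (τx τy : V → ℝ)
    (s q : ℝ) (w : List E) : 0 < S.msvf p τx τy s q w :=
  mul_pos (mul_pos (Real.rpow_pos_of_pos (wordProb_pos hp w) _)
    (Real.rpow_pos_of_pos (S.alpha1_pos w) _)) (Real.rpow_pos_of_pos (S.alpha2_pos w) _)

lemma msvf_eq_mul (S : BoxLikeGIFS V E) (p : E → ℝ) (τx τy : V → ℝ) (s s' q : ℝ)
    (w : List E) :
    S.msvf p τx τy s q w = S.msvf p τx τy s' q w * S.alpha2 w ^ (s - s') := by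
  unfold msvf
  rw [mul_assoc _ (S.alpha2 w ^ _) (S.alpha2 w ^ _), ← Real.rpow_add (S.alpha2_pos w)]
  congr 2
  ring

lemma msvf_le_pow_mul (S : BoxLikeGIFS V E) {p : E → ℝ} (hp : ∀ e, 0 < p e) (τx τy : V → ℝ)
    {s s' : ℝ} (hs : s' ≤ s) (q : ℝ) {r : ℝ} (hr0 : 0 < r)
    (hr : ∀ e, S.a e ≤ r ∧ S.b e ≤ r) (w : List E) :
    S.msvf p τx τy s q w ≤ (r ^ (s - s')) ^ w.length * S.msvf p τx τy s' q w := by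
  rw [S.msvf_eq_mul p τx τy s s' q w, mul_comm]
  refine mul_le_mul_of_nonneg_right ?_ (S.msvf_pos hp τx τy s' q w).le
  rw [← Real.rpow_natCast, ← Real.rpow_mul hr0.le, mul_comm (s - s'), Real.rpow_mul hr0.le,
    Real.rpow_natCast]
  exact Real.rpow_le_rpow (S.alpha2_pos w).le (S.alpha2_le_pow hr w) (by linarith)

/-- The multiplicative weight attached to a coordinate direction; `msvf` is the one of the
direction of the longest side. -/
noncomputable def dirWeight (S : BoxLikeGIFS V E) (p : E → ℝ) (τx τy : V → ℝ) (s q : ℝ) (i : Bool)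
    (w : List E) : ℝ :=
  wordProb p w ^ q * S.side w i ^ pairTau τx τy (S.wordInit w) i *
    S.side w (!i) ^ (s - pairTau τx τy (S.wordInit w) i)

lemma dirWeight_pos (S : BoxLikeGIFS V E) {p : E → ℝ} (hp : ∀ e, 0 < p e) (τx τy : V → ℝ)
    (s q : ℝ) (i : Bool) (w : List E) : 0 < S.dirWeight p τx τy s q i w :=
  mul_pos (mul_pos (Real.rpow_pos_of_pos (wordProb_pos hp w) _)
    (Real.rpow_pos_of_pos (S.side_pos w _) _)) (Real.rpow_pos_of_pos (S.side_pos w _) _)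

lemma dirWeight_append {S : BoxLikeGIFS V E} {p : E → ℝ} (hp : ∀ e, 0 < p e) {τx τy : V → ℝ}
    (hS : S.IsSplit τx τy) (s q : ℝ) (i : Bool) {w u : List E} (hw : w ≠ []) (hu : u ≠ [])
    (h : S.Admissible (w ++ u)) :
    S.dirWeight p τx τy s q i (w ++ u) =
      S.dirWeight p τx τy s q i w * S.dirWeight p τx τy s q (i == S.wordDiag w) u := by
  obtain ⟨hadm, -, hterm⟩ := (S.admissible_append_iff hw hu).1 h
  have h1 := hS.pairTau_wordInit hw hadm i
  rw [hterm] at h1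
  unfold dirWeight
  rw [S.wordInit_append hw, ← h1, wordProb_append, side_append, side_append,
    Real.mul_rpow (wordProb_pos hp w).le (wordProb_pos hp u).le,
    Real.mul_rpow (S.side_pos _ _).le (S.side_pos _ _).le,
    Real.mul_rpow (S.side_pos _ _).le (S.side_pos _ _).le]
  have : ((!i) == S.wordDiag w) = !(i == S.wordDiag w) := by
    cases i <;> cases S.wordDiag w <;> rfl
  rw [this]
  ring

lemma msvf_eq_dirWeight {S : BoxLikeGIFS V E} (p : E → ℝ) {τx τy : V → ℝ}
    (hS : S.IsSplit τx τy) (s q : ℝ) {w : List E} (hw : w ≠ []) (h : S.Admissible w)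
    {i : Bool} (hi : S.side w (!i) ≤ S.side w i) :
    S.msvf p τx τy s q w = S.dirWeight p τx τy s q i w := by
  have key : ∀ (T : ℝ) (c d T' : ℝ), 0 < c → c = d →
      c ^ T * d ^ (s - T) = c ^ T' * d ^ (s - T') := by
    rintro T c d T' hc rfl
    rw [← Real.rpow_add hc, ← Real.rpow_add hc]
    congr 1
    ring
  have h0 := hS.pairTau_wordInit hw h false
  have h1 := hS.pairTau_wordInit hw h true
  have hc := S.side_pos w false
  unfold msvf dirWeight wordTau alpha1 alpha2
  rw [mul_assoc, mul_assoc]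
  congr 1
  cases i
  · have hi' : (S.wdims w).2 ≤ (S.wdims w).1 := hi
    rw [max_eq_left hi', min_eq_right hi', h0]
    cases hd : S.wordDiag w <;> simp [side, pairTau, hi']
  · have hi' : (S.wdims w).1 ≤ (S.wdims w).2 := hi
    rw [max_eq_right hi', min_eq_left hi', h1]
    rcases hi'.lt_or_eq with hlt | heq
    · cases hd : S.wordDiag w <;> simp [side, pairTau, hlt.not_ge]
    · simp only [side]
      exact key _ _ _ _ (heq ▸ hc) heq.symm

/-- The ratio of the two directional weights. -/
lemma dirWeight_not_eq {S : BoxLikeGIFS V E} (p : E → ℝ) {τx τy : V → ℝ} {t : ℝ}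
    (ht : ∀ v, τx v + τy v = t) (s q : ℝ) (i : Bool) (w : List E) :
    S.dirWeight p τx τy s q i w =
      S.dirWeight p τx τy s q (!i) w * (S.side w i / S.side w (!i)) ^ (t - s) := by
  have hc := S.side_pos w i
  have hd := S.side_pos w (!i)
  have hsum : pairTau τx τy (S.wordInit w) (!i) = t - pairTau τx τy (S.wordInit w) i := by
    have := ht (S.wordInit w)
    cases i <;> simp [pairTau] <;> linarith
  unfold dirWeight
  rw [Bool.not_not, hsum, Real.div_rpow hc.le hd.le, div_eq_mul_inv, ← Real.rpow_neg hd.le]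
  generalize pairTau τx τy (S.wordInit w) i = X
  have e1 : S.side w i ^ X = S.side w i ^ (s - (t - X)) * S.side w i ^ (t - s) := by
    rw [← Real.rpow_add hc]
    congr 1
    ring
  have e2 : S.side w (!i) ^ (s - X) = S.side w (!i) ^ (t - X) * S.side w (!i) ^ (-(t - s)) := by
    rw [← Real.rpow_add hd]
    congr 1
    ring
  rw [e1, e2]
  ring

lemma dirWeight_le_msvf {S : BoxLikeGIFS V E} {p : E → ℝ} (hp : ∀ e, 0 < p e) {τx τy : V → ℝ}
    (hS : S.IsSplit τx τy) {t : ℝ} (ht : ∀ v, τx v + τy v = t) {s : ℝ} (hs : s ≤ t) (q : ℝ)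
    {w : List E} (hw : w ≠ []) (h : S.Admissible w) (i : Bool) :
    S.dirWeight p τx τy s q i w ≤ S.msvf p τx τy s q w := by
  rcases le_total (S.side w (!i)) (S.side w i) with hi | hi
  · exact (msvf_eq_dirWeight p hS s q hw h hi).ge
  · rw [msvf_eq_dirWeight p hS s q hw h (i := !i) (by rwa [Bool.not_not]),
      dirWeight_not_eq p ht s q i w]
    refine mul_le_of_le_one_right (S.dirWeight_pos hp τx τy s q _ w).le ?_
    exact Real.rpow_le_one (div_pos (S.side_pos _ _) (S.side_pos _ _)).le
      ((div_le_one (S.side_pos _ _)).2 hi) (by linarith)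

lemma msvf_le_dirWeight {S : BoxLikeGIFS V E} {p : E → ℝ} (hp : ∀ e, 0 < p e) {τx τy : V → ℝ}
    (hS : S.IsSplit τx τy) {t : ℝ} (ht : ∀ v, τx v + τy v = t) {s : ℝ} (hs : t ≤ s) (q : ℝ)
    {w : List E} (hw : w ≠ []) (h : S.Admissible w) (i : Bool) :
    S.msvf p τx τy s q w ≤ S.dirWeight p τx τy s q i w := by
  rcases le_total (S.side w (!i)) (S.side w i) with hi | hi
  · exact (msvf_eq_dirWeight p hS s q hw h hi).le
  · rw [msvf_eq_dirWeight p hS s q hw h (i := !i) (by rwa [Bool.not_not]),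
      dirWeight_not_eq p ht s q i w]
    refine le_mul_of_one_le_right (S.dirWeight_pos hp τx τy s q _ w).le ?_
    exact Real.one_le_rpow_of_pos_of_le_one_of_nonpos
      (div_pos (S.side_pos _ _) (S.side_pos _ _))
      ((div_le_one (S.side_pos _ _)).2 hi) (by linarith)

lemma msvf_append_le {S : BoxLikeGIFS V E} {p : E → ℝ} (hp : ∀ e, 0 < p e) {τx τy : V → ℝ}
    (hS : S.IsSplit τx τy) {t : ℝ} (ht : ∀ v, τx v + τy v = t) {s : ℝ} (hs : s ≤ t) (q : ℝ)
    {w u : List E} (hw : w ≠ []) (hu : u ≠ []) (h : S.Admissible (w ++ u)) :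
    S.msvf p τx τy s q (w ++ u) ≤ S.msvf p τx τy s q w * S.msvf p τx τy s q u := by
  obtain ⟨i, hi⟩ := S.exists_side_le (w ++ u)
  rw [msvf_eq_dirWeight p hS s q (by simp [hw]) h hi, dirWeight_append hp hS s q i hw hu h]
  exact mul_le_mul (dirWeight_le_msvf hp hS ht hs q hw h.left_of_append _)
    (dirWeight_le_msvf hp hS ht hs q hu h.right_of_append _)
    (S.dirWeight_pos hp _ _ _ _ _ _).le (S.msvf_pos hp _ _ _ _ _).le

lemma msvf_mul_le_append {S : BoxLikeGIFS V E} {p : E → ℝ} (hp : ∀ e, 0 < p e)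
    {τx τy : V → ℝ} (hS : S.IsSplit τx τy) {t : ℝ} (ht : ∀ v, τx v + τy v = t) {s : ℝ}
    (hs : t ≤ s) (q : ℝ) {w u : List E} (hw : w ≠ []) (hu : u ≠ [])
    (h : S.Admissible (w ++ u)) :
    S.msvf p τx τy s q w * S.msvf p τx τy s q u ≤ S.msvf p τx τy s q (w ++ u) := by
  obtain ⟨i, hi⟩ := S.exists_side_le (w ++ u)
  rw [msvf_eq_dirWeight p hS s q (by simp [hw]) h hi, dirWeight_append hp hS s q i hw hu h]
  exact mul_le_mul (msvf_le_dirWeight hp hS ht hs q hw h.left_of_append _)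
    (msvf_le_dirWeight hp hS ht hs q hu h.right_of_append _)
    (S.msvf_pos hp _ _ _ _ _).le (S.dirWeight_pos hp _ _ _ _ _ _).le

/-- Appending boundedly many letters increases `msvf` at most by a bounded factor. -/
lemma exists_msvf_append_le_mul [Finite E] {S : BoxLikeGIFS V E} {p : E → ℝ}
    (hp : ∀ e, 0 < p e) {τx τy : V → ℝ} (hS : S.IsSplit τx τy) {t : ℝ}
    (ht : ∀ v, τx v + τy v = t) {s : ℝ} (hs : t ≤ s) (q : ℝ) (m : ℕ) :
    ∃ C : ℝ, 1 ≤ C ∧ ∀ w u : List E, w ≠ [] → u.length ≤ m → S.Admissible (w ++ u) →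
      S.msvf p τx τy s q (w ++ u) ≤ C * S.msvf p τx τy s q w := by
  have hfin : {u : List E | u.length ≤ m}.Finite := List.finite_length_le E m
  obtain ⟨B, hB⟩ := (hfin.image fun u =>
    max (S.dirWeight p τx τy s q false u) (S.dirWeight p τx τy s q true u)).bddAbove
  have hB' : ∀ i u, u.length ≤ m → S.dirWeight p τx τy s q i u ≤ B := by
    intro i u hu
    refine le_trans ?_ (hB ⟨u, hu, rfl⟩)
    cases i
    · exact le_max_left _ _
    · exact le_max_right _ _
  refine ⟨max 1 B, le_max_left _ _, fun w u hw hlen h => ?_⟩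
  rcases eq_or_ne u [] with rfl | hu
  · rw [List.append_nil]
    exact le_mul_of_one_le_left (S.msvf_pos hp _ _ _ _ _).le (le_max_left _ _)
  · obtain ⟨i, hi⟩ := S.exists_side_le w
    refine (msvf_le_dirWeight hp hS ht hs q (by simp [hw]) h i).trans ?_
    rw [dirWeight_append hp hS s q i hw hu h,
      ← msvf_eq_dirWeight p hS s q hw h.left_of_append hi, mul_comm]
    exact mul_le_mul_of_nonneg_right ((hB' _ u hlen).trans (le_max_right _ _))
      (S.msvf_pos hp _ _ _ _ _).le

end Vertices

/-! ### Sums over words of fixed length -/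

/-- The admissible words of length `n`. -/
noncomputable def words [Fintype E] (S : BoxLikeGIFS V E) (n : ℕ) : Finset (List E) :=
  ((List.finite_length_eq E n).subset
    (fun _ h => h.1 : {w : List E | w.length = n ∧ S.Admissible w} ⊆ _)).toFinset

lemma mem_words [Fintype E] {S : BoxLikeGIFS V E} {n : ℕ} {w : List E} :
    w ∈ S.words n ↔ w.length = n ∧ S.Admissible w := by
  simp [words]

lemma mnorm_Amat [Nonempty V] [Fintype E] [Fintype V] (S : BoxLikeGIFS V E) {p : E → ℝ}
    (hp : ∀ e, 0 < p e) (τx τy : V → ℝ) (s q : ℝ) (n : ℕ) :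
    mnorm (S.Amat p τx τy s q n) = ∑ w ∈ S.words n, S.msvf p τx τy s q w := by
  have hnn : ∀ v v' (f : Fin n → E), 0 ≤ if S.Admissible (List.ofFn f) ∧
      S.wordInit (List.ofFn f) = v ∧ S.wordTerm (List.ofFn f) = v'
      then S.msvf p τx τy s q (List.ofFn f) else 0 := by
    intro v v' f
    split_ifs
    · exact (S.msvf_pos hp _ _ _ _ _).le
    · exact le_rfl
  have h1 : mnorm (S.Amat p τx τy s q n) = ∑ f : Fin n → E,
      if S.Admissible (List.ofFn f) then S.msvf p τx τy s q (List.ofFn f) else 0 := by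
    refine (Finset.sum_congr rfl fun v _ => (Finset.sum_congr rfl fun v' _ =>
      abs_of_nonneg (Finset.sum_nonneg fun f _ => hnn v v' f)).trans Finset.sum_comm).trans ?_
    rw [Finset.sum_comm]
    refine Finset.sum_congr rfl fun f _ => ?_
    by_cases h : S.Admissible (List.ofFn f)
    · simp [h, ite_and]
    · simp [h]
  rw [h1, ← Finset.sum_filter]
  refine Finset.sum_bij (fun f _ => List.ofFn f) ?_ ?_ ?_ ?_
  · intro f hf
    exact mem_words.2 ⟨List.length_ofFn, (Finset.mem_filter.1 hf).2⟩
  · intro f _ g _ h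
    exact List.ofFn_injective h
  · intro w hw
    obtain ⟨rfl, hadm⟩ := mem_words.1 hw
    exact ⟨w.get, Finset.mem_filter.2 ⟨Finset.mem_univ _, by rwa [List.ofFn_get]⟩,
      List.ofFn_get w⟩
  · intro f _
    rfl

lemma sum_words_le_pow_mul [Nonempty V] [Fintype E] (S : BoxLikeGIFS V E) {p : E → ℝ}
    (hp : ∀ e, 0 < p e) (τx τy : V → ℝ) {s s' : ℝ} (hs : s' ≤ s) (q : ℝ) {r : ℝ} (hr0 : 0 < r)
    (hr : ∀ e, S.a e ≤ r ∧ S.b e ≤ r) (n : ℕ) :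
    ∑ w ∈ S.words n, S.msvf p τx τy s q w ≤
      (r ^ (s - s')) ^ n * ∑ w ∈ S.words n, S.msvf p τx τy s' q w := by
  rw [Finset.mul_sum]
  refine Finset.sum_le_sum fun w hw => ?_
  obtain ⟨rfl, -⟩ := mem_words.1 hw
  exact S.msvf_le_pow_mul hp τx τy hs q hr0 hr w

lemma exists_length_lt [Fintype E] (S : BoxLikeGIFS V E) {δ : ℝ} (hδ : 0 < δ) :
    ∃ N : ℕ, ∀ w : List E, δ ≤ S.alpha2 w → w.length < N := by
  obtain ⟨r, hr0, hr1, hr⟩ := S.exists_ratio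
  obtain ⟨N, hN⟩ := exists_pow_lt_of_lt_one hδ hr1
  refine ⟨N, fun w hw => ?_⟩
  by_contra! hcon
  have := pow_le_pow_of_le_one hr0.le hr1.le hcon
  have := S.alpha2_le_pow hr w
  linarith

lemma length_le_of_mem_EstarDelta {S : BoxLikeGIFS V E} {δ : ℝ} {N : ℕ}
    (hN : ∀ w : List E, δ ≤ S.alpha2 w → w.length < N) {w : List E}
    (hw : w ∈ S.EstarDelta δ) : w.length ≤ N := by
  have := hN _ hw.2.2.2
  rw [List.length_dropLast] at this
  omega

lemma finite_EstarDelta [Fintype E] (S : BoxLikeGIFS V E) {δ : ℝ} (hδ : 0 < δ) :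
    (S.EstarDelta δ).Finite := by
  obtain ⟨N, hN⟩ := S.exists_length_lt hδ
  exact (List.finite_length_le E N).subset fun w hw => length_le_of_mem_EstarDelta hN hw

/-- A word crossing the level `δ` has a prefix in `E^*_δ`. -/
lemma exists_prefix_mem_EstarDelta {S : BoxLikeGIFS V E} {δ : ℝ} {u v : List E}
    (hu : δ ≤ S.alpha2 u) (huv : S.alpha2 (u ++ v) < δ) (h : S.Admissible (u ++ v)) :
    ∃ y z, v = y ++ z ∧ u ++ y ∈ S.EstarDelta δ := by
  induction v generalizing u with
  | nil =>
    rw [List.append_nil] at huv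
    exact absurd huv hu.not_gt
  | cons e v ih =>
    have happ : u ++ e :: v = (u ++ [e]) ++ v := by simp
    rw [happ] at huv h
    by_cases he : S.alpha2 (u ++ [e]) < δ
    · exact ⟨[e], v, rfl, by simp, h.left_of_append, he, by simpa using hu⟩
    · obtain ⟨y, z, rfl, hy⟩ := ih (not_lt.1 he) huv h
      exact ⟨e :: y, z, rfl, by simpa using hy⟩

/-- Above the critical exponent the sums over words of length `n` are summable. -/
lemma summable_sum_words [Nonempty V] [Fintype E] (S : BoxLikeGIFS V E) {p : E → ℝ}
    (hp : ∀ e, 0 < p e) (τx τy : V → ℝ) (q : ℝ) {γ s : ℝ} (hs : γ < s)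
    (hγ : Tendsto (fun k : ℕ => (∑ w ∈ S.words k, S.msvf p τx τy γ q w) ^ ((k : ℝ)⁻¹))
      atTop (nhds 1)) :
    Summable fun n => ∑ w ∈ S.words n, S.msvf p τx τy s q w := by
  obtain ⟨r, hr0, hr1, hr⟩ := S.exists_ratio
  have hρ0 : 0 < r ^ (s - γ) := Real.rpow_pos_of_pos hr0 _
  have hρ1 : r ^ (s - γ) < 1 := Real.rpow_lt_one hr0.le hr1 (by linarith)
  have hle := fun n => S.sum_words_le_pow_mul hp τx τy hs.le q hr0 hr n
  have hnn : ∀ s n, 0 ≤ ∑ w ∈ S.words n, S.msvf p τx τy s q w := fun s n =>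
    Finset.sum_nonneg fun w _ => (S.msvf_pos hp _ _ _ _ _).le
  generalize r ^ (s - γ) = ρ at *
  obtain ⟨κ, hκ1, hκ2⟩ := exists_between ((one_lt_inv₀ hρ0).2 hρ1)
  have hκ0 : 0 < κ := by linarith
  have hρκ : ρ * κ < 1 := by
    have := mul_lt_mul_of_pos_left hκ2 hρ0
    rwa [mul_inv_cancel₀ hρ0.ne'] at this
  refine Summable.of_norm_bounded_eventually_nat
    (summable_geometric_of_lt_one (by positivity) hρκ) ?_
  filter_upwards [hγ.eventually (gt_mem_nhds hκ1), eventually_ge_atTop 1] with n hn hn1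
  rw [Real.norm_of_nonneg (hnn s n), mul_pow]
  refine (hle n).trans (mul_le_mul_of_nonneg_left ?_ (by positivity))
  have hn0 : (n : ℝ) ≠ 0 := by positivity
  calc _ = ((∑ w ∈ S.words n, S.msvf p τx τy γ q w) ^ ((n : ℝ)⁻¹)) ^ n := by
        rw [← Real.rpow_natCast, ← Real.rpow_mul (hnn γ n), inv_mul_cancel₀ hn0, Real.rpow_one]
    _ ≤ κ ^ n := pow_le_pow_left₀ (Real.rpow_nonneg (hnn γ n) _) hn.le n

/-- Below the critical exponent the sums over words of length `n` tend to infinity. -/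
lemma tendsto_sum_words_atTop [Nonempty V] [Fintype E] (S : BoxLikeGIFS V E) {p : E → ℝ}
    (hp : ∀ e, 0 < p e) (τx τy : V → ℝ) (q : ℝ) {γ s : ℝ} (hs : s < γ)
    (hγ : Tendsto (fun k : ℕ => (∑ w ∈ S.words k, S.msvf p τx τy γ q w) ^ ((k : ℝ)⁻¹))
      atTop (nhds 1)) :
    Tendsto (fun n => ∑ w ∈ S.words n, S.msvf p τx τy s q w) atTop atTop := by
  obtain ⟨r, hr0, hr1, hr⟩ := S.exists_ratio
  have hρ0 : 0 < r ^ (γ - s) := Real.rpow_pos_of_pos hr0 _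
  have hρ1 : r ^ (γ - s) < 1 := Real.rpow_lt_one hr0.le hr1 (by linarith)
  have hle := fun n => S.sum_words_le_pow_mul hp τx τy hs.le q hr0 hr n
  have hnn : ∀ n, 0 ≤ ∑ w ∈ S.words n, S.msvf p τx τy γ q w := fun n =>
    Finset.sum_nonneg fun w _ => (S.msvf_pos hp _ _ _ _ _).le
  generalize r ^ (γ - s) = ρ at *
  obtain ⟨κ, hκ1, hκ2⟩ := exists_between hρ1
  have hκ0 : 0 < κ := by linarith
  refine tendsto_atTop_mono' _ ?_
    (tendsto_pow_atTop_atTop_of_one_lt ((one_lt_div hρ0).2 hκ1))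
  filter_upwards [hγ.eventually (lt_mem_nhds hκ2), eventually_ge_atTop 1] with n hn hn1
  have hn0 : (n : ℝ) ≠ 0 := by positivity
  rw [div_pow, div_le_iff₀ (by positivity), mul_comm]
  refine le_trans ?_ (hle n)
  calc κ ^ n ≤ ((∑ w ∈ S.words n, S.msvf p τx τy γ q w) ^ ((n : ℝ)⁻¹)) ^ n :=
        pow_le_pow_left₀ hκ0.le hn.le n
    _ = _ := by
        rw [← Real.rpow_natCast, ← Real.rpow_mul (hnn n), inv_mul_cancel₀ hn0, Real.rpow_one]

/-! ### The upper bound -/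

lemma sum_le_tsum_words [Nonempty V] [Fintype E] (S : BoxLikeGIFS V E) {p : E → ℝ}
    (hp : ∀ e, 0 < p e) (τx τy : V → ℝ) (s q : ℝ)
    (hsum : Summable fun n => ∑ w ∈ S.words n, S.msvf p τx τy s q w)
    (F : Finset (List E)) (hF : ∀ w ∈ F, S.Admissible w) :
    ∑ w ∈ F, S.msvf p τx τy s q w ≤ ∑' n, ∑ w ∈ S.words n, S.msvf p τx τy s q w := by
  have hpos := S.msvf_pos hp τx τy s q
  calc _ = ∑ n ∈ F.image List.length, ∑ w ∈ F with w.length = n, S.msvf p τx τy s q w :=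
        (Finset.sum_fiberwise_of_maps_to (fun w hw => Finset.mem_image_of_mem _ hw) _).symm
    _ ≤ ∑ n ∈ F.image List.length, ∑ w ∈ S.words n, S.msvf p τx τy s q w := by
        refine Finset.sum_le_sum fun n _ => ?_
        refine Finset.sum_le_sum_of_subset_of_nonneg (fun w hw => ?_) fun w _ _ => (hpos w).le
        obtain ⟨hw, hlen⟩ := Finset.mem_filter.1 hw
        exact mem_words.2 ⟨hlen, hF w hw⟩
    _ ≤ _ := hsum.sum_le_tsum _ fun n _ => Finset.sum_nonneg fun w _ => (hpos w).le

/-! ### The lower bound in the submultiplicative case -/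

lemma sum_words_le_sum_mul [Fintype E] (S : BoxLikeGIFS V E) {φ : List E → ℝ} (hφ : ∀ w, 0 ≤ φ w)
    (hsub : ∀ w u, w ≠ [] → u ≠ [] → S.Admissible (w ++ u) → φ (w ++ u) ≤ φ w * φ u)
    {δ : ℝ} (hδ : 0 < δ) (hδ1 : δ ≤ 1) {N : ℕ}
    (hN : ∀ w : List E, δ ≤ S.alpha2 w → w.length < N) {n : ℕ} (hn : N < n) :
    ∑ w ∈ S.words n, φ w ≤ ∑ x ∈ (S.finite_EstarDelta hδ).toFinset,
      φ x * ∑ u ∈ S.words (n - x.length), φ u := by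
  have hpt : ∀ w ∈ S.words n, φ w ≤ ∑ x ∈ (S.finite_EstarDelta hδ).toFinset,
      if x <+: w then φ x * φ (w.drop x.length) else 0 := by
    intro w hw
    obtain ⟨hlen, hadm⟩ := mem_words.1 hw
    have hlt : S.alpha2 w < δ := by
      by_contra! hcon
      have := hN w hcon
      omega
    obtain ⟨x, z, rfl, hx⟩ := exists_prefix_mem_EstarDelta (u := []) (v := w)
      (by rw [S.alpha2_nil]; exact hδ1) hlt hadm
    rw [List.nil_append] at hx
    have hxN := length_le_of_mem_EstarDelta hN hx
    have hz : z ≠ [] := by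
      rintro rfl
      rw [List.append_nil] at hlen
      omega
    refine (hsub x z hx.1 hz hadm).trans ?_
    have := Finset.single_le_sum (f := fun x' => if x' <+: x ++ z then
      φ x' * φ ((x ++ z).drop x'.length) else 0) (s := (S.finite_EstarDelta hδ).toFinset)
      (fun x' _ => by
        split_ifs
        · exact mul_nonneg (hφ _) (hφ _)
        · exact le_rfl)
      ((Set.Finite.mem_toFinset _).2 hx)
    simpa using this
  refine (Finset.sum_le_sum hpt).trans ?_
  rw [Finset.sum_comm]
  refine Finset.sum_le_sum fun x _ => ?_
  rw [← Finset.sum_filter, ← Finset.mul_sum]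
  refine mul_le_mul_of_nonneg_left ?_ (hφ x)
  have hinj : Set.InjOn (fun w : List E => w.drop x.length)
      ↑((S.words n).filter fun w => x <+: w) := by
    intro w hw w' hw' h
    obtain ⟨-, u, rfl⟩ := Finset.mem_filter.1 hw
    obtain ⟨-, u', rfl⟩ := Finset.mem_filter.1 hw'
    simpa using h
  rw [← Finset.sum_image hinj]
  refine Finset.sum_le_sum_of_subset_of_nonneg (fun u hu => ?_) fun w _ _ => hφ w
  obtain ⟨w, hw, rfl⟩ := Finset.mem_image.1 hu
  obtain ⟨hw, u, rfl⟩ := Finset.mem_filter.1 hw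
  obtain ⟨hlen, hadm⟩ := mem_words.1 hw
  refine mem_words.2 ⟨by simp [← hlen], ?_⟩
  simpa using hadm.right_of_append

lemma one_le_sum_EstarDelta_of_submultiplicative [Fintype E] (S : BoxLikeGIFS V E) {φ : List E → ℝ}
    (hφ : ∀ w, 0 ≤ φ w)
    (hsub : ∀ w u, w ≠ [] → u ≠ [] → S.Admissible (w ++ u) → φ (w ++ u) ≤ φ w * φ u)
    (hlim : Tendsto (fun n => ∑ w ∈ S.words n, φ w) atTop atTop)
    {δ : ℝ} (hδ : 0 < δ) (hδ1 : δ ≤ 1) :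
    1 ≤ ∑ x ∈ (S.finite_EstarDelta hδ).toFinset, φ x := by
  by_contra! hcon
  obtain ⟨N, hN⟩ := S.exists_length_lt hδ
  have hL : ∀ n, 0 ≤ ∑ w ∈ S.words n, φ w := fun n => Finset.sum_nonneg fun w _ => hφ w
  set M := ∑ m ∈ Finset.range (N + 1), ∑ w ∈ S.words m, φ w with hM
  have hM0 : 0 ≤ M := Finset.sum_nonneg fun m _ => hL m
  have hbound : ∀ n, ∑ w ∈ S.words n, φ w ≤ M := by
    intro n
    induction n using Nat.strong_induction_on with
    | _ n ih =>
      rcases le_or_gt n N with h | h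
      · exact Finset.single_le_sum (f := fun m => ∑ w ∈ S.words m, φ w) (fun m _ => hL m)
          (Finset.mem_range.2 (by omega))
      · calc _ ≤ _ := S.sum_words_le_sum_mul hφ hsub hδ hδ1 hN h
          _ ≤ ∑ x ∈ (S.finite_EstarDelta hδ).toFinset, φ x * M := by
              refine Finset.sum_le_sum fun x hx => mul_le_mul_of_nonneg_left (ih _ ?_) (hφ x)
              have := List.length_pos_iff.2 ((Set.Finite.mem_toFinset _).1 hx).1
              omega
          _ ≤ M := by
              rw [← Finset.sum_mul]
              exact mul_le_of_le_one_left hM0 hcon.le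
  obtain ⟨n, hn⟩ := (hlim.eventually_gt_atTop M).exists
  exact absurd (hbound n) hn.not_ge

/-! ### The lower bound in the supermultiplicative case -/

/-- A finite family `Λ` of loops of length `m` based at a vertex with `∑_{λ ∈ Λ} φ(λ) ≥ 1`
bounds from below the sums of a supermultiplicative `φ` over `E^*_δ`, below each word ending at
that vertex. -/
lemma le_mul_sum_EstarDelta_of_loops [Nonempty V] [Fintype E] (S : BoxLikeGIFS V E)
    {φ : List E → ℝ} (hφ : ∀ w, 0 < φ w)
    (hsup : ∀ w u, w ≠ [] → u ≠ [] → S.Admissible (w ++ u) → φ w * φ u ≤ φ (w ++ u))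
    {m : ℕ} (hm : 0 < m) {C : ℝ} (hC : 1 ≤ C)
    (hφC : ∀ w u, w ≠ [] → u.length ≤ m → S.Admissible (w ++ u) → φ (w ++ u) ≤ C * φ w)
    {v : V} {Λ : Finset (List E)}
    (hΛ : ∀ l ∈ Λ, l.length = m ∧ S.Admissible l ∧ S.wordInit l = v ∧ S.wordTerm l = v)
    (hΛ1 : 1 ≤ ∑ l ∈ Λ, φ l) {δ : ℝ} (hδ : 0 < δ) {u : List E} (hu : u ≠ [])
    (hadm : S.Admissible u) (hterm : S.wordTerm u = v) (huδ : δ ≤ S.alpha2 u) :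
    φ u ≤ (Λ.card * C) *
      ∑ x ∈ (S.finite_EstarDelta hδ).toFinset with u <+: x, φ x := by
  obtain ⟨N, hN⟩ := S.exists_length_lt hδ
  induction hk : N - u.length using Nat.strong_induction_on generalizing u with
  | _ k ih =>
    have huN := hN u huδ
    set X := (S.finite_EstarDelta hδ).toFinset with hX
    have hmemX : ∀ x, x ∈ X ↔ x ∈ S.EstarDelta δ := fun x => Set.Finite.mem_toFinset _
    set K : ℝ := Λ.card * C with hK
    have hK0 : 0 ≤ K := by positivity
    have happ : ∀ l ∈ Λ, l ≠ [] ∧ S.Admissible (u ++ l) := by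
      intro l hl
      obtain ⟨h1, h2, h3, -⟩ := hΛ l hl
      have hne : l ≠ [] := by
        rintro rfl
        simp at h1
        omega
      exact ⟨hne, (S.admissible_append_iff hu hne).2 ⟨hadm, h2, hterm.trans h3.symm⟩⟩
    let wt : List E → List E → ℝ := fun l x =>
      if x.length ≤ u.length + m then C else if u ++ l <+: x then K else 0
    have hwt0 : ∀ l x, 0 ≤ wt l x := by
      intro l x
      simp only [wt]
      split_ifs <;> positivity
    have hloop : ∀ l ∈ Λ, φ (u ++ l) ≤ ∑ x ∈ X with u <+: x, wt l x * φ x := by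
      intro l hl
      obtain ⟨hne, hul⟩ := happ l hl
      obtain ⟨hlen, hl2, -, hl4⟩ := hΛ l hl
      by_cases hδl : δ ≤ S.alpha2 (u ++ l)
      · have h1 := ih _ (by rw [← hk, List.length_append]; omega) (u := u ++ l) (by simp [hu])
          hul ((S.wordTerm_append u hne).trans hl4) hδl rfl
        refine h1.trans ?_
        rw [Finset.mul_sum]
        calc ∑ x ∈ X with u ++ l <+: x, K * φ x
            ≤ ∑ x ∈ X with u ++ l <+: x, wt l x * φ x := by
              refine Finset.sum_le_sum fun x hx => ?_
              obtain ⟨hxX, hpre⟩ := Finset.mem_filter.1 hx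
              have hlong : ¬ x.length ≤ u.length + m := by
                intro hle
                have heq : u ++ l = x := hpre.eq_of_length_le (by simp [hlen, hle])
                have hlt := ((hmemX x).1 hxX).2.2.1
                rw [← heq] at hlt
                exact absurd hδl hlt.not_ge
              simp [wt, hlong, hpre]
          _ ≤ _ := by
              refine Finset.sum_le_sum_of_subset_of_nonneg (fun x hx => ?_)
                fun x _ _ => mul_nonneg (hwt0 _ _) (hφ x).le
              obtain ⟨hxX, hpre⟩ := Finset.mem_filter.1 hx
              exact Finset.mem_filter.2 ⟨hxX, (List.prefix_append u l).trans hpre⟩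
      · obtain ⟨y, z, rfl, hy⟩ := exists_prefix_mem_EstarDelta huδ (not_le.1 hδl) hul
        rw [List.length_append] at hlen
        have h1 : φ (u ++ (y ++ z)) ≤ C * φ (u ++ y) := by
          rw [← List.append_assoc] at hul ⊢
          exact hφC _ z (by simp [hu]) (by omega) hul
        have h2 : wt (y ++ z) (u ++ y) = C := by
          simp only [wt]
          rw [if_pos (by rw [List.length_append]; omega)]
        rw [← h2] at h1
        exact h1.trans (Finset.single_le_sum (f := fun x => wt (y ++ z) x * φ x)
          (fun x _ => mul_nonneg (hwt0 _ _) (hφ x).le)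
          (Finset.mem_filter.2 ⟨(hmemX _).2 hy, List.prefix_append u y⟩))
    have hwt : ∀ x, ∑ l ∈ Λ, wt l x ≤ K := by
      intro x
      by_cases hx : x.length ≤ u.length + m
      · simp [wt, hx, hK]
      · simp only [wt, if_neg hx]
        rw [← Finset.sum_filter, Finset.sum_const, nsmul_eq_mul]
        refine mul_le_of_le_one_left hK0 ?_
        have : (Λ.filter fun l => u ++ l <+: x).card ≤ 1 := by
          refine Finset.card_le_one.2 fun l hl l' hl' => ?_
          obtain ⟨hl, hp⟩ := Finset.mem_filter.1 hl
          obtain ⟨hl', hp'⟩ := Finset.mem_filter.1 hl'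
          have hlen : (u ++ l).length = (u ++ l').length := by
            simp [(hΛ l hl).1, (hΛ l' hl').1]
          exact List.append_cancel_left
            ((List.prefix_of_prefix_length_le hp hp' hlen.le).eq_of_length hlen)
        exact_mod_cast this
    calc φ u ≤ φ u * ∑ l ∈ Λ, φ l := le_mul_of_one_le_right (hφ u).le hΛ1
      _ = ∑ l ∈ Λ, φ u * φ l := Finset.mul_sum _ _ _
      _ ≤ ∑ l ∈ Λ, φ (u ++ l) := Finset.sum_le_sum fun l hl =>
          hsup u l hu (happ l hl).1 (happ l hl).2
      _ ≤ ∑ l ∈ Λ, ∑ x ∈ X with u <+: x, wt l x * φ x := Finset.sum_le_sum hloop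
      _ = ∑ x ∈ X with u <+: x, (∑ l ∈ Λ, wt l x) * φ x := by
          rw [Finset.sum_comm]
          exact Finset.sum_congr rfl fun x _ => (Finset.sum_mul _ _ _).symm
      _ ≤ ∑ x ∈ X with u <+: x, K * φ x := Finset.sum_le_sum fun x _ =>
          mul_le_mul_of_nonneg_right (hwt x) (hφ x).le
      _ = _ := (Finset.mul_sum _ _ _).symm

lemma exists_word_between [Nonempty V] {S : BoxLikeGIFS V E} (hSC : S.StronglyConnected)
    (v v' : V) : ∃ w : List E, w ≠ [] ∧ S.Admissible w ∧ S.wordInit w = v ∧ S.wordTerm w = v' := by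
  have hpath := hSC v v'
  induction hpath with
  | single h =>
    obtain ⟨e, he, he'⟩ := h
    exact ⟨[e], by simp, List.isChain_singleton _, by simpa [wordInit] using he,
      by simpa [wordTerm] using he'⟩
  | tail _ h ih =>
    obtain ⟨e, he, he'⟩ := h
    obtain ⟨w, hw, hadm, hi, ht⟩ := ih
    refine ⟨w ++ [e], by simp, (S.admissible_append_iff hw (by simp)).2
      ⟨hadm, List.isChain_singleton _, ?_⟩, ?_, ?_⟩
    · rw [ht, ← he]
      simp [wordInit]
    · rw [S.wordInit_append hw, hi]
    · rw [S.wordTerm_append w (by simp), ← he']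
      simp [wordTerm]

/-- If the sums of a supermultiplicative `φ` over words of length `n` tend to infinity, there is
a family of loops of equal length on which `φ` has sum at least `1`. -/
lemma exists_loops [Nonempty V] [Fintype V] [Fintype E] {S : BoxLikeGIFS V E}
    (hSC : S.StronglyConnected) {φ : List E → ℝ} (hφ : ∀ w, 0 < φ w)
    (hsup : ∀ w u, w ≠ [] → u ≠ [] → S.Admissible (w ++ u) → φ w * φ u ≤ φ (w ++ u))
    (hlim : Tendsto (fun n => ∑ w ∈ S.words n, φ w) atTop atTop) :
    ∃ (m : ℕ) (v : V) (Λ : Finset (List E)), 0 < m ∧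
      (∀ l ∈ Λ, l.length = m ∧ S.Admissible l ∧ S.wordInit l = v ∧ S.wordTerm l = v) ∧
      1 ≤ ∑ l ∈ Λ, φ l := by
  choose c hc0 hcadm hci hct using exists_word_between hSC
  obtain ⟨j, hj⟩ := Finite.exists_min fun j : V × V => φ (c j.1 j.2)
  have hε := hφ (c j.1 j.2)
  set ε := φ (c j.1 j.2) with hεdef
  obtain ⟨n, hn, hn1⟩ := ((hlim.eventually_gt_atTop (Fintype.card (V × V) * ε⁻¹)).and
    (eventually_ge_atTop 1)).exists
  rw [← Finset.sum_fiberwise (S.words n) (fun w => (S.wordInit w, S.wordTerm w)) φ] at hn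
  have hex : ∃ k : V × V, ε⁻¹ <
      ∑ w ∈ S.words n with (S.wordInit w, S.wordTerm w) = k, φ w := by
    by_contra! hcon
    have := Finset.sum_le_card_nsmul Finset.univ _ _ fun k _ => hcon k
    rw [nsmul_eq_mul, Finset.card_univ] at this
    linarith
  obtain ⟨⟨v, v'⟩, hk⟩ := hex
  have hmem : ∀ w, w ∈ (S.words n).filter (fun w => (S.wordInit w, S.wordTerm w) = (v, v')) ↔
      (w.length = n ∧ S.Admissible w) ∧ S.wordInit w = v ∧ S.wordTerm w = v' := by
    intro w
    rw [Finset.mem_filter, mem_words, Prod.mk.injEq]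
  generalize (S.words n).filter (fun w => (S.wordInit w, S.wordTerm w) = (v, v')) = W at hk hmem
  have hne : ∀ w ∈ W, w ≠ [] := by
    intro w hw
    have := ((hmem w).1 hw).1.1
    rintro rfl
    simp at this
    omega
  have hadm : ∀ w ∈ W, S.Admissible (w ++ c v' v) := fun w hw =>
    (S.admissible_append_iff (hne w hw) (hc0 _ _)).2 ⟨((hmem w).1 hw).1.2, hcadm _ _, by
      rw [hci, ((hmem w).1 hw).2.2]⟩
  refine ⟨n + (c v' v).length, v, W.image (· ++ c v' v), by omega, ?_, ?_⟩
  · intro l hl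
    obtain ⟨w, hw, rfl⟩ := Finset.mem_image.1 hl
    obtain ⟨⟨h1, -⟩, h2, -⟩ := (hmem w).1 hw
    exact ⟨by simp [h1], hadm w hw, by rw [S.wordInit_append (hne w hw), h2],
      by rw [S.wordTerm_append w (hc0 _ _), hct]⟩
  · rw [Finset.sum_image fun w _ w' _ h => List.append_cancel_right h]
    calc 1 = ε⁻¹ * ε := (inv_mul_cancel₀ hε.ne').symm
      _ ≤ (∑ w ∈ W, φ w) * φ (c v' v) :=
          mul_le_mul hk.le (hj (v', v)) hε.le (Finset.sum_nonneg fun w _ => (hφ w).le)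
      _ = ∑ w ∈ W, φ w * φ (c v' v) := Finset.sum_mul _ _ _
      _ ≤ _ := Finset.sum_le_sum fun w hw => hsup w _ (hne w hw) (hc0 _ _) (hadm w hw)

lemma exists_le_sum_EstarDelta_of_supermultiplicative [Nonempty V] [Fintype V] [Fintype E]
    {S : BoxLikeGIFS V E} (hSC : S.StronglyConnected) {φ : List E → ℝ} (hφ : ∀ w, 0 < φ w)
    (hsup : ∀ w u, w ≠ [] → u ≠ [] → S.Admissible (w ++ u) → φ w * φ u ≤ φ (w ++ u))
    (hφC : ∀ m : ℕ, ∃ C : ℝ, 1 ≤ C ∧ ∀ w u, w ≠ [] → u.length ≤ m →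
      S.Admissible (w ++ u) → φ (w ++ u) ≤ C * φ w)
    (hlim : Tendsto (fun n => ∑ w ∈ S.words n, φ w) atTop atTop) :
    ∃ c : ℝ, 0 < c ∧ ∃ δ₀ : ℝ, 0 < δ₀ ∧ ∀ (δ : ℝ) (hδ : 0 < δ), δ < δ₀ →
      c ≤ ∑ x ∈ (S.finite_EstarDelta hδ).toFinset, φ x := by
  obtain ⟨m, v, Λ, hm, hΛ, hΛ1⟩ := exists_loops hSC hφ hsup hlim
  obtain ⟨C, hC, hCle⟩ := hφC m
  have hne : Λ.Nonempty := by
    rw [Finset.nonempty_iff_ne_empty]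
    rintro rfl
    norm_num at hΛ1
  obtain ⟨u, hu⟩ := hne
  obtain ⟨hlen, hadm, -, hterm⟩ := hΛ u hu
  have hK : 0 < (Λ.card : ℝ) * C := by
    have : 0 < Λ.card := Finset.card_pos.2 ⟨u, hu⟩
    positivity
  refine ⟨φ u / (Λ.card * C), div_pos (hφ u) hK, S.alpha2 u, S.alpha2_pos u,
    fun δ hδ hlt => ?_⟩
  rw [div_le_iff₀' hK]
  refine (S.le_mul_sum_EstarDelta_of_loops hφ hsup hm hC hCle hΛ hΛ1 hδ
    (List.ne_nil_of_length_pos (hlen ▸ hm)) hadm hterm hlt.le).trans ?_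
  exact mul_le_mul_of_nonneg_left (Finset.sum_le_sum_of_subset_of_nonneg
    (Finset.filter_subset _ _) fun x _ _ => (hφ x).le) hK.le

end BoxLikeGIFS
end LqGIFS

/-- sums of `φ^{s,q}` over `E^*_δ`.  (a) For `s > γ(q)` the sums
`∑_{w ∈ E^*_δ} φ^{s,q}(w)` are bounded above uniformly in `δ > 0`; (b) for `s < γ(q)`
they are bounded below by a positive constant for all sufficiently small `δ > 0`.
(Sums over the possibly infinite set `E^*_δ` are expressed via finite subsets; as
`φ^{s,q} ≥ 0`, this is equivalent.) -/
theorem statement17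
    {V E : Type} [Fintype V] [Fintype E] [Nonempty V]
    (S : BoxLikeGIFS V E) (hSC : S.StronglyConnected)
    (p : E → ℝ) (hp : S.IsWeights p)
    (μ : V → Measure (ℝ × ℝ)) (hμ : S.IsGDMeasure p μ)
    (q : ℝ) (hq : 0 ≤ q)
    (τx τy : V → ℝ)
    (hτx : ∀ v : V, HasLq1 ((μ v).map Prod.fst) q (τx v))
    (hτy : ∀ v : V, HasLq1 ((μ v).map Prod.snd) q (τy v))
    (γ : ℝ)
    (hγ : Tendsto (fun k : ℕ => (mnorm (S.Amat p τx τy γ q k)) ^ ((k : ℝ)⁻¹))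
      atTop (nhds 1)) :
    (∀ s : ℝ, γ < s → ∃ C : ℝ, ∀ δ : ℝ, 0 < δ →
      ∀ F : Finset (List E), (∀ w ∈ F, w ∈ S.EstarDelta δ) →
        (∑ w ∈ F, S.msvf p τx τy s q w) ≤ C) ∧
    (∀ s : ℝ, s < γ → ∃ c : ℝ, 0 < c ∧ ∃ δ₀ : ℝ, 0 < δ₀ ∧
      ∀ δ : ℝ, 0 < δ → δ < δ₀ →
        ∃ F : Finset (List E), (∀ w ∈ F, w ∈ S.EstarDelta δ) ∧
          c ≤ ∑ w ∈ F, S.msvf p τx τy s q w) := by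
  have hp0 := hp.1
  simp_rw [S.mnorm_Amat hp0] at hγ
  have hmem : ∀ (δ : ℝ) (hδ : 0 < δ), ∀ w ∈ (S.finite_EstarDelta hδ).toFinset,
      w ∈ S.EstarDelta δ := fun δ hδ w hw => (Set.Finite.mem_toFinset _).1 hw
  refine ⟨fun s hs => ⟨_, fun δ _ F hF => S.sum_le_tsum_words hp0 τx τy s q
    (S.summable_sum_words hp0 τx τy q hs hγ) F fun w hw => (hF w hw).2.1⟩, fun s hs => ?_⟩
  obtain ⟨hsplit, hconst⟩ := BoxLikeGIFS.isSplit_of_pairTau_le hSC (hμ.pairTau_le hp hq hτx hτy)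
  obtain ⟨t, ht⟩ : ∃ t, ∀ v, τx v + τy v = t :=
    ⟨_, fun v => hconst v (Classical.arbitrary V)⟩
  have hlim := S.tendsto_sum_words_atTop hp0 τx τy q hs hγ
  have hpos := S.msvf_pos hp0 τx τy s q
  rcases le_total s t with hst | hst
  · exact ⟨1, one_pos, 1, one_pos, fun δ hδ hδ1 => ⟨_, hmem δ hδ,
      S.one_le_sum_EstarDelta_of_submultiplicative (fun w => (hpos w).le)
        (fun w u hw hu h => BoxLikeGIFS.msvf_append_le hp0 hsplit ht hst q hw hu h)
        hlim hδ hδ1.le⟩⟩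
  · obtain ⟨c, hc, δ₀, hδ₀, h⟩ :=
      BoxLikeGIFS.exists_le_sum_EstarDelta_of_supermultiplicative hSC hpos
        (fun w u hw hu h => BoxLikeGIFS.msvf_mul_le_append hp0 hsplit ht hst q hw hu h)
        (BoxLikeGIFS.exists_msvf_append_le_mul hp0 hsplit ht hst q) hlim
    exact ⟨c, hc, δ₀, hδ₀, fun δ hδ hlt => ⟨_, hmem δ hδ, h δ hδ hlt⟩⟩
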